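/- arXiv:2402.09887 — 2 statements merged into one kernel-verified Lean document; each statement's English description precedes it below -/
import Mathlib

section
/- Let μ be a Dyck path of size n+1, let {i} be the set of positions where μ has an innermost peak (a consecutive UR pair corresponding to an innermost cap of the associated diagram, with position n+1 corresponding to the rightmost vertical strand), and let μ_i be the Dyck path of size n obtained by deleting the corresponding UR pair. Then the generating function of cover-inclusive Dyck tilings satisfies Z(μ) = Σ_{i ∈ {i}} ([i]/[n+1]) · Z(μ_i). -/
noncomputable section
open scoped Classical

/-! ### The field `ℂ(q)` and quantum integers -/

/-- The field `ℂ(q)` of rational functions in one variable `q`. -/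
abbrev 𝕂 : Type := RatFunc ℂ

/-- The variable `q`. -/
def qA : 𝕂 := RatFunc.X

/-- The quantum integer `[n] = (q^n - q^{-n})/(q - q^{-1})`. -/
def qInt (n : ℤ) : 𝕂 := (qA ^ n - qA⁻¹ ^ n) / (qA - qA⁻¹)

/-! ### Dyck paths -/

/-- A Dyck path, encoded as a list of booleans: `true` = up step `U = (1,1)`,
`false` = down step `R = (1,-1)`; the path never goes below the horizontal axis
and ends on it. -/
def IsDyckPath (μ : List Bool) : Prop :=
  μ.count true = μ.count false ∧ ∀ k : ℕ, (μ.take k).count false ≤ (μ.take k).count true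

/-- Dyck paths of size `n` (length `2n`).  Under the folding bijection these index the
`n`-strand Temperley–Lieb diagrams. -/
def DyckPath (n : ℕ) : Type := {μ : List Bool // μ.length = 2 * n ∧ IsDyckPath μ}

/-- The (1-based) position of the first peak `UR` of a path, together with the path
obtained by deleting this `UR` pair.  For a diagram, the first peak is an innermost cap. -/
def stripPeak : List Bool → ℕ × List Bool
  | true :: false :: rest => (1, rest)
  | b :: rest => ((stripPeak rest).1 + 1, b :: (stripPeak rest).2)
  | [] => (0, [])

/-- The set of (1-based) positions `j` such that step `j` is `U` and step `j+1` is `R`.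
For the associated Temperley–Lieb diagram, such a position `j ≤ n` is an innermost cap
joining bottom points `j, j+1`, and `j = n+1` (for an `(n+1)`-strand diagram) is the
rightmost vertical strand. -/
def peaks (μ : List Bool) : Finset ℕ :=
  (Finset.Icc 1 μ.length).filter fun j => μ[j - 1]? = some true ∧ μ[j]? = some false

/-- Delete the `UR` pair at (1-based) position `j`; for diagrams this removes the
corresponding innermost cap. -/
def removePeak (μ : List Bool) (j : ℕ) : List Bool := μ.take (j - 1) ++ μ.drop (j + 1)

/-- The height of the path `μ` (drawn from `(0,0)` with steps `(1,±1)`) at abscissa `x`. -/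
def pht (μ : List Bool) (x : ℤ) : ℤ := 2 * ((μ.take x.toNat).count true : ℤ) - x

/-- The Dyck path `U^i R U^(n-i) R^(n-1)` of the diagram `g_{n,i}` (`1 ≤ i ≤ n`). -/
def gpath (n i : ℕ) : List Bool :=
  List.replicate i true ++ [false] ++ List.replicate (n - i) true ++ List.replicate (n - 1) false

/-! ### Cover-inclusive Dyck tilings -/

/-- The centers of the unit boxes of the region `R(μ)` above the Dyck path `μ`
(of size `n`) and below the top path `UⁿRⁿ`. -/
def region (n : ℕ) (μ : List Bool) : Set (ℤ × ℤ) :=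
  {p | 1 ≤ p.1 ∧ p.1 ≤ 2 * n - 1 ∧ Odd (p.1 + p.2) ∧
    pht μ p.1 < p.2 ∧ p.2 < min p.1 (2 * n - p.1)}

/-- A Dyck tile: a ribbon of unit boxes whose centers form a Dyck path. -/
def IsDyckTile (d : Finset (ℤ × ℤ)) : Prop :=
  ∃ (x₀ y₀ : ℤ) (k : ℕ) (f : ℕ → ℤ),
    f 0 = y₀ ∧ f k = y₀ ∧ (∀ j < k, f (j + 1) = f j + 1 ∨ f (j + 1) = f j - 1) ∧
    (∀ j ≤ k, y₀ ≤ f j) ∧ d = (Finset.range (k + 1)).image fun j : ℕ => (x₀ + (j : ℤ), f j)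

/-- `h(d)`: the minimal height of the centers of the boxes of a tile `d`. -/
def tileHt (d : Finset (ℤ × ℤ)) : ℤ := sInf (Prod.snd '' (d : Set (ℤ × ℤ)))

/-- The size of a Dyck tile (a tile of size `s` consists of `2s+1` boxes). -/
def tileSize (d : Finset (ℤ × ℤ)) : ℕ := (d.card - 1) / 2

/-- A cover-inclusive Dyck tiling of the region between `μ` and the top path `UⁿRⁿ`:
a collection of Dyck tiles partitioning the region such that the translate of any tile
by `(0,-2)` is strictly below `μ` or contained in another tile. -/
def IsCITiling (n : ℕ) (μ : List Bool) (T : Finset (Finset (ℤ × ℤ))) : Prop :=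
  (∀ d ∈ T, IsDyckTile d) ∧
  (∀ d ∈ T, ∀ p ∈ d, p ∈ region n μ) ∧
  (∀ p ∈ region n μ, ∃! d, d ∈ T ∧ p ∈ d) ∧
  (∀ d ∈ T, (∀ p ∈ d, p.2 - 2 < pht μ p.1) ∨ ∃ d' ∈ T, ∀ p ∈ d, ((p.1, p.2 - 2) : ℤ × ℤ) ∈ d')

/-- The generating function `Z(μ) = Σ_{D ∈ 𝒟(μ)} Π_{d ∈ D} [h(d)]/[h(d)+1]` of
cover-inclusive Dyck tilings above `μ`. -/
def ZA (n : ℕ) (μ : List Bool) : 𝕂 :=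
  ∑ᶠ T ∈ {T : Finset (Finset (ℤ × ℤ)) | IsCITiling n μ T},
    ∏ d ∈ T, qInt (tileHt d) / qInt (tileHt d + 1)

/-!
Write `U` and `R` for up and down steps. On balanced words of size `N`, the generating function `Z`
satisfies `[2] Z(Uᵏ⁺¹Rw) = Z(UᵏRUw) + ∑ Z(Uᵏ⁺²DRu)`, summed over the factorizations `w = DUu` with
`D` a Dyck word, together with `Z(Rw) = 0` and `Z(UᴺRᴺ) = 1`. To see this, take a tiling
above `Uᵏ⁺¹Rw` and its tile starting over the first descent. If the path goes up where this tile
ends, removing the tile leaves a tiling above one of the words `Uᵏ⁺²DRu`. If the path goes down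
there, the tile and the bottom tile to its right merge into a single tile above `UᵏRUw`. The
remaining tilings above `UᵏRUw` have a single box over their first descent, and removing it leaves
a tiling above `Uᵏ⁺¹Rw`. Eliminating the merged tilings from the two counts gives the relation.

For `N = n + 1`, the function `μ ↦ ∑ [i] Z(μᵢ)` satisfies the same linear system with top value
`[n + 1]`, because `[2][i] = [i + 1] + [i - 1]` and removing a peak commutes with flipping an up
step. The system determines its solution from the top value: since `[2]` has valuation greater than
`1` at `q = ∞`, no word can attain the maximal valuation of a nonzero solution vanishing at the top.
-/

/-! ### Arcs and strips -/

/-- The function `f` traces a Dyck path on `[a, b]`: its steps are `±1`, it takes the same value at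
`a` and `b`, and it stays above that value in between. -/
structure IsDyckArc (f : ℤ → ℤ) (a b : ℤ) : Prop where
  le : a ≤ b
  ends : f b = f a
  step : ∀ x, a ≤ x → x < b → f (x + 1) = f x + 1 ∨ f (x + 1) = f x - 1
  ge : ∀ x, a ≤ x → x ≤ b → f a ≤ f x

theorem IsDyckArc.congr {f g : ℤ → ℤ} {a b c : ℤ} (h : IsDyckArc f a b)
    (hfg : ∀ x, a ≤ x → x ≤ b → f x = g x + c) : IsDyckArc g a b where
  le := h.le
  ends := by
    have := h.le; have := h.ends; have := hfg a; have := hfg b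
    omega
  step x hax hxb := by
    have := h.step x hax hxb; have := hfg x; have := hfg (x + 1)
    omega
  ge x hax hxb := by
    have := h.le; have := h.ge x hax hxb; have := hfg a; have := hfg x
    omega

/-- The boxes sitting directly on the graph of `f` over the columns `a, …, b`. -/
def strip (f : ℤ → ℤ) (a b : ℤ) : Finset (ℤ × ℤ) :=
  (Finset.Icc a b).image fun x => (x, f x + 1)

theorem mem_strip {f : ℤ → ℤ} {a b : ℤ} {p : ℤ × ℤ} :
    p ∈ strip f a b ↔ a ≤ p.1 ∧ p.1 ≤ b ∧ p.2 = f p.1 + 1 := by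
  simp only [strip, Finset.mem_image, Finset.mem_Icc, Prod.ext_iff]
  exact ⟨by rintro ⟨x, ⟨ha, hb⟩, rfl, hp⟩; exact ⟨ha, hb, hp.symm⟩,
    fun ⟨ha, hb, hp⟩ => ⟨p.1, ⟨ha, hb⟩, rfl, hp.symm⟩⟩

theorem mk_mem_strip {f : ℤ → ℤ} {a b x : ℤ} : (x, f x + 1) ∈ strip f a b ↔ a ≤ x ∧ x ≤ b := by
  simp only [mem_strip, and_true]

theorem strip_congr {f g : ℤ → ℤ} {a b : ℤ} (h : ∀ x, a ≤ x → x ≤ b → f x = g x) :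
    strip f a b = strip g a b :=
  Finset.image_congr fun x hx => by
    simp only [h x (Finset.mem_Icc.1 hx).1 (Finset.mem_Icc.1 hx).2]

theorem strip_right_inj {f : ℤ → ℤ} {a b c : ℤ} (hb : a ≤ b) (hc : a ≤ c) :
    strip f a b = strip f a c ↔ b = c := by
  refine ⟨fun h => ?_, fun h => h ▸ rfl⟩
  have hbc : (b, f b + 1) ∈ strip f a c := h ▸ mk_mem_strip.2 ⟨hb, le_rfl⟩
  have hcb : (c, f c + 1) ∈ strip f a b := h ▸ mk_mem_strip.2 ⟨hc, le_rfl⟩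
  exact le_antisymm (mk_mem_strip.1 hbc).2 (mk_mem_strip.1 hcb).2

theorem isDyckTile_iff {d : Finset (ℤ × ℤ)} :
    IsDyckTile d ↔ ∃ f a b, IsDyckArc f a b ∧ d = strip f a b := by
  constructor
  · rintro ⟨a, y, k, f, hf₀, hfk, hstep, hge, rfl⟩
    refine ⟨fun x => f (x - a).toNat - 1, a, a + k, ⟨by omega, by simp [hf₀, hfk], ?_, ?_⟩, ?_⟩
    · intro x hax hxk
      have := hstep (x - a).toNat (by omega)
      rw [show (x + 1 - a).toNat = (x - a).toNat + 1 by omega]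
      omega
    · intro x hax hxk
      have := hge (x - a).toNat (by omega)
      simp only [sub_self, Int.toNat_zero, hf₀]
      omega
    · ext ⟨x, z⟩
      simp only [Finset.mem_image, Finset.mem_range, Prod.mk.injEq, mem_strip, sub_add_cancel]
      constructor
      · rintro ⟨j, hj, rfl, rfl⟩
        exact ⟨by omega, by omega, by congr 1; omega⟩
      · rintro ⟨hax, hxk, rfl⟩
        exact ⟨(x - a).toNat, by omega, by omega, rfl⟩
  · rintro ⟨f, a, b, ⟨hab, hends, hstep, hge⟩, rfl⟩
    refine ⟨a, f a + 1, (b - a).toNat, fun j => f (a + j) + 1, by simp, ?_, ?_, ?_, ?_⟩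
    · simp only [show a + ((b - a).toNat : ℤ) = b by omega, hends]
    · intro j hj
      have := hstep (a + j) (by omega) (by omega)
      simp only [Nat.cast_add, Nat.cast_one, ← add_assoc]
      omega
    · intro j hj
      simpa using hge (a + j) (by omega) (by omega)
    · ext ⟨x, z⟩
      simp only [Finset.mem_image, Finset.mem_range, Prod.mk.injEq, mem_strip]
      constructor
      · rintro ⟨hax, hxb, rfl⟩
        have hx : a + ((x - a).toNat : ℤ) = x := by omega
        exact ⟨(x - a).toNat, by omega, hx, by rw [hx]⟩
      · rintro ⟨j, hj, rfl, rfl⟩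
        exact ⟨by omega, by omega, rfl⟩

theorem IsDyckArc.isDyckTile {f : ℤ → ℤ} {a b : ℤ} (h : IsDyckArc f a b) :
    IsDyckTile (strip f a b) :=
  isDyckTile_iff.2 ⟨f, a, b, h, rfl⟩

theorem IsDyckArc.tileHt_strip {f : ℤ → ℤ} {a b : ℤ} (h : IsDyckArc f a b) :
    tileHt (strip f a b) = f a + 1 := by
  refine IsLeast.csInf_eq ⟨⟨_, Finset.mem_coe.2 (mk_mem_strip.2 ⟨le_rfl, h.le⟩), rfl⟩, ?_⟩
  rintro _ ⟨p, hp, rfl⟩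
  obtain ⟨hap, hpb, hp⟩ := mem_strip.1 (Finset.mem_coe.1 hp)
  have := h.ge p.1 hap hpb
  omega

theorem IsDyckTile.nonempty {d : Finset (ℤ × ℤ)} (hd : IsDyckTile d) : d.Nonempty := by
  obtain ⟨f, a, b, hf, rfl⟩ := isDyckTile_iff.1 hd
  exact ⟨_, mk_mem_strip.2 ⟨le_rfl, hf.le⟩⟩

theorem IsDyckTile.exists_eq_strip {d : Finset (ℤ × ℤ)} {g : ℤ → ℤ} (hd : IsDyckTile d)
    (hg : ∀ p ∈ d, p.2 = g p.1 + 1) : ∃ a b, IsDyckArc g a b ∧ d = strip g a b := by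
  obtain ⟨f, a, b, hf, rfl⟩ := isDyckTile_iff.1 hd
  have hfg (x : ℤ) (hax : a ≤ x) (hxb : x ≤ b) : f x = g x :=
    add_right_cancel (hg _ (mk_mem_strip.2 ⟨hax, hxb⟩))
  exact ⟨a, b, hf.congr (c := 0) (by simpa using hfg), strip_congr hfg⟩

/-! ### Cover-inclusive tilings above a height function -/

/-- The centers of the boxes between the graph of `f` and the top path `UᴺRᴺ`; this is
`region N μ` with an arbitrary height function in place of `pht μ`. -/
def boxesAbove (N : ℕ) (f : ℤ → ℤ) : Set (ℤ × ℤ) :=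
  {p | 1 ≤ p.1 ∧ p.1 ≤ 2 * N - 1 ∧ Odd (p.1 + p.2) ∧ f p.1 < p.2 ∧ p.2 < min p.1 (2 * N - p.1)}

theorem mem_boxesAbove {N : ℕ} {f : ℤ → ℤ} {p : ℤ × ℤ} :
    p ∈ boxesAbove N f ↔ 1 ≤ p.1 ∧ p.1 ≤ 2 * N - 1 ∧ (p.1 + p.2) % 2 = 1 ∧
      f p.1 < p.2 ∧ p.2 < p.1 ∧ p.1 + p.2 < 2 * N := by
  simp only [boxesAbove, Set.mem_ofPred_eq, Int.odd_iff, lt_min_iff, lt_sub_iff_add_lt']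

theorem finite_boxesAbove (N : ℕ) (f : ℤ → ℤ) : (boxesAbove N f).Finite := by
  refine ((Finset.Icc (1 : ℤ) (2 * N - 1)).biUnion fun x =>
    (Finset.Ioo (f x) x).image fun y => (x, y)).finite_toSet.subset fun p hp => ?_
  obtain ⟨hp₁, hpN, -, hfp, hp, -⟩ := mem_boxesAbove.1 hp
  simp only [Finset.coe_biUnion, Set.mem_iUnion, Finset.mem_coe, Finset.mem_image, Finset.mem_Icc,
    Finset.mem_Ioo]
  exact ⟨p.1, ⟨hp₁, hpN⟩, p.2, ⟨hfp, hp⟩, rfl⟩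

/-- The tiles of `T` are Dyck tiles that partition `A`. -/
structure IsTiling (A : Set (ℤ × ℤ)) (T : Finset (Finset (ℤ × ℤ))) : Prop where
  tile : ∀ d ∈ T, IsDyckTile d
  subset : ∀ d ∈ T, ∀ p ∈ d, p ∈ A
  existsUnique : ∀ p ∈ A, ∃! d, d ∈ T ∧ p ∈ d

theorem isTiling_insert_iff {A : Set (ℤ × ℤ)} {S : Finset (ℤ × ℤ)} {R : Finset (Finset (ℤ × ℤ))}
    (hS : IsDyckTile S) (hSA : ∀ p ∈ S, p ∈ A) :
    IsTiling A (insert S R) ∧ S ∉ R ↔ IsTiling (A \ S) R := by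
  constructor
  · rintro ⟨h, hSR⟩
    refine ⟨fun d hd => h.tile d (Finset.mem_insert_of_mem hd), fun d hd p hp => ?_,
      fun p hp => ?_⟩
    · have hpA := h.subset d (Finset.mem_insert_of_mem hd) p hp
      refine ⟨hpA, fun hpS => hSR ?_⟩
      rwa [(h.existsUnique p hpA).unique ⟨Finset.mem_insert_self S R, hpS⟩
        ⟨Finset.mem_insert_of_mem hd, hp⟩]
    · obtain ⟨d, ⟨hd, hpd⟩, hunique⟩ := h.existsUnique p hp.1
      have hdS : d ≠ S := by rintro rfl; exact hp.2 hpd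
      exact ⟨d, ⟨Finset.mem_of_mem_insert_of_ne hd hdS, hpd⟩,
        fun e he => hunique e ⟨Finset.mem_insert_of_mem he.1, he.2⟩⟩
  · intro h
    refine ⟨⟨Finset.forall_mem_insert _ _ _ |>.2 ⟨hS, h.tile⟩,
      Finset.forall_mem_insert _ _ _ |>.2 ⟨hSA, fun d hd p hp => (h.subset d hd p hp).1⟩,
      fun p hpA => ?_⟩, fun hSR => ?_⟩
    · by_cases hpS : p ∈ S
      · refine ⟨S, ⟨Finset.mem_insert_self S R, hpS⟩, fun e ⟨he, hpe⟩ => ?_⟩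
        exact (Finset.mem_insert.1 he).resolve_right fun heR => (h.subset e heR p hpe).2 hpS
      · obtain ⟨d, ⟨hd, hpd⟩, hunique⟩ := h.existsUnique p ⟨hpA, hpS⟩
        refine ⟨d, ⟨Finset.mem_insert_of_mem hd, hpd⟩, fun e ⟨he, hpe⟩ => ?_⟩
        have heS : e ≠ S := by rintro rfl; exact hpS hpe
        exact hunique e ⟨Finset.mem_of_mem_insert_of_ne he heS, hpe⟩
    · obtain ⟨p, hp⟩ := hS.nonempty
      exact (h.subset S hSR p hp).2 hp

/-- The cover-inclusiveness condition for a tile `d` of a tiling `T` above `f`. -/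
def IsSupported (f : ℤ → ℤ) (T : Finset (Finset (ℤ × ℤ))) (d : Finset (ℤ × ℤ)) : Prop :=
  (∀ p ∈ d, p.2 - 2 < f p.1) ∨ ∃ d' ∈ T, ∀ p ∈ d, (p.1, p.2 - 2) ∈ d'

/-- The finite set of cover-inclusive Dyck tilings above the graph of `f`. -/
def tilings (N : ℕ) (f : ℤ → ℤ) : Finset (Finset (Finset (ℤ × ℤ))) :=
  (finite_boxesAbove N f).toFinset.powerset.powerset.filter fun T =>
    IsTiling (boxesAbove N f) T ∧ ∀ d ∈ T, IsSupported f T d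

theorem mem_tilings {N : ℕ} {f : ℤ → ℤ} {T : Finset (Finset (ℤ × ℤ))} :
    T ∈ tilings N f ↔ IsTiling (boxesAbove N f) T ∧ ∀ d ∈ T, IsSupported f T d := by
  simp only [tilings, Finset.mem_filter, and_iff_right_iff_imp, Finset.mem_powerset]
  exact fun hT d hd => Finset.mem_powerset.2 fun p hp =>
    (finite_boxesAbove N f).mem_toFinset.2 (hT.1.subset d hd p hp)

/-- The weight `[h(d)]/[h(d)+1]` of a Dyck tile. -/
def tileWeight (d : Finset (ℤ × ℤ)) : 𝕂 := qInt (tileHt d) / qInt (tileHt d + 1)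

theorem IsDyckArc.tileWeight_strip {f : ℤ → ℤ} {a b : ℤ} (h : IsDyckArc f a b) :
    tileWeight (strip f a b) = qInt (f a + 1) / qInt (f a + 2) := by
  rw [tileWeight, h.tileHt_strip, add_assoc, one_add_one_eq_two]

/-- The generating function of a family of sets of tiles. -/
def weightSum (𝒯 : Finset (Finset (Finset (ℤ × ℤ)))) : 𝕂 := ∑ T ∈ 𝒯, ∏ d ∈ T, tileWeight d

theorem ZA_eq_weightSum (n : ℕ) (μ : List Bool) : ZA n μ = weightSum (tilings n (pht μ)) := by
  refine finsum_mem_eq_sum_of_inter_support_eq _ (congrArg (· ∩ _) (Set.ext fun T => ?_))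
  rw [Finset.mem_coe, mem_tilings]
  exact ⟨fun ⟨h₁, h₂, h₃, h₄⟩ => ⟨⟨h₁, h₂, h₃⟩, h₄⟩, fun ⟨⟨h₁, h₂, h₃⟩, h₄⟩ => ⟨h₁, h₂, h₃, h₄⟩⟩

theorem sum_prod_eq_sum_memberSubfamily {α ι R : Type*} [DecidableEq α] [CommSemiring R]
    {𝒜 : Finset (Finset α)} {J : Finset ι} {E : ι → α} (w : α → R)
    (h : ∀ A ∈ 𝒜, ∃! b, b ∈ J ∧ E b ∈ A) :
    ∑ A ∈ 𝒜, ∏ a ∈ A, w a = ∑ b ∈ J, w (E b) * ∑ A ∈ 𝒜.memberSubfamily (E b), ∏ a ∈ A, w a := by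
  have hsplit : ∀ A ∈ 𝒜, ∏ a ∈ A, w a = ∑ b ∈ J, if E b ∈ A then ∏ a ∈ A, w a else 0 := by
    intro A hA
    obtain ⟨b, ⟨hbJ, hbA⟩, hunique⟩ := h A hA
    rw [Finset.sum_eq_single_of_mem b hbJ fun c hcJ hcb =>
      if_neg fun hcA => hcb (hunique c ⟨hcJ, hcA⟩), if_pos hbA]
  rw [Finset.sum_congr rfl hsplit, Finset.sum_comm]
  refine Finset.sum_congr rfl fun b _ => ?_
  rw [← Finset.sum_filter, ← Finset.image_insert_memberSubfamily, Finset.mul_sum,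
    Finset.sum_image fun A hA B hB hAB => ?_]
  · exact Finset.sum_congr rfl fun A hA => Finset.prod_insert (Finset.mem_memberSubfamily.1 hA).2
  · rw [← Finset.erase_insert (Finset.mem_memberSubfamily.1 hA).2,
      ← Finset.erase_insert (Finset.mem_memberSubfamily.1 hB).2, hAB]

/-- Inside a cover-inclusive tiling, the tile through a box touching the graph cannot lie on
another tile, so all of its boxes touch the graph. -/
theorem exists_strip_mem_of_mem_tilings {N : ℕ} {f : ℤ → ℤ} {T : Finset (Finset (ℤ × ℤ))} {x : ℤ}
    (hT : T ∈ tilings N f) (hx : (x, f x + 1) ∈ boxesAbove N f) :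
    ∃ a b, IsDyckArc f a b ∧ a ≤ x ∧ x ≤ b ∧ strip f a b ∈ T := by
  obtain ⟨htiling, hsupp⟩ := mem_tilings.1 hT
  obtain ⟨d, hd, hxd⟩ := (htiling.existsUnique _ hx).exists
  have htouch : ∀ p ∈ d, p.2 = f p.1 + 1 := by
    intro p hp
    have hpf := (mem_boxesAbove.1 (htiling.subset d hd p hp)).2.2.2.1
    rcases hsupp d hd with hlow | ⟨e, he, hshift⟩
    · have := hlow p hp
      omega
    · have := (mem_boxesAbove.1 (htiling.subset e he _ (hshift _ hxd))).2.2.2.1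
      dsimp only at this
      omega
  obtain ⟨a, b, harc, rfl⟩ := (htiling.tile d hd).exists_eq_strip htouch
  obtain ⟨hax, hxb⟩ := mk_mem_strip.1 hxd
  exact ⟨a, b, harc, hax, hxb, hd⟩

/-! ### Bottom tiles over the first descent -/

/-- The height function `f` has `±1` steps and begins with exactly `i < N` up steps, followed by a
down step. -/
structure InitialAscent (N : ℕ) (f : ℤ → ℤ) (i : ℤ) : Prop where
  nonneg : 0 ≤ i
  lt : i < N
  eq_self : ∀ x, 0 ≤ x → x ≤ i → f x = x
  down : f (i + 1) = i - 1
  step : ∀ x, f (x + 1) = f x + 1 ∨ f (x + 1) = f x - 1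
  even : ∀ x, (f x + x) % 2 = 0

/-- The right ends of the bottom tiles above `f` that start in column `a`. -/
def arcEnds (N : ℕ) (f : ℤ → ℤ) (a : ℤ) : Finset ℤ :=
  (Finset.Icc a (2 * N - f a)).filter fun b => IsDyckArc f a b ∧ b + f b + 1 < 2 * N

theorem mem_arcEnds {N : ℕ} {f : ℤ → ℤ} {a b : ℤ} :
    b ∈ arcEnds N f a ↔ IsDyckArc f a b ∧ b + f b + 1 < 2 * N := by
  simp only [arcEnds, Finset.mem_filter, Finset.mem_Icc, and_iff_right_iff_imp]
  rintro ⟨h, hb⟩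
  have := h.le; have := h.ends
  omega

theorem existsUnique_mem_arcEnds {N : ℕ} {f : ℤ → ℤ} {T : Finset (Finset (ℤ × ℤ))} {x : ℤ}
    (hT : T ∈ tilings N f) (hx : (x, f x + 1) ∈ boxesAbove N f)
    (hstart : ∀ a b, a ≤ x → x ≤ b → strip f a b ∈ T → a = x) :
    ∃! b, b ∈ arcEnds N f x ∧ strip f x b ∈ T := by
  have htiling := (mem_tilings.1 hT).1
  obtain ⟨a, b, harc, hax, hxb, hd⟩ := exists_strip_mem_of_mem_tilings hT hx
  obtain rfl := hstart a b hax hxb hd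
  have hb := mem_boxesAbove.1 (htiling.subset _ hd _ (mk_mem_strip.2 ⟨harc.le, le_rfl⟩))
  refine ⟨b, ⟨mem_arcEnds.2 ⟨harc, by omega⟩, hd⟩, fun c ⟨hc, hcT⟩ => ?_⟩
  have hac := (mem_arcEnds.1 hc).1.le
  rw [← strip_right_inj hac hxb]
  exact (htiling.existsUnique _ hx).unique ⟨hcT, mk_mem_strip.2 ⟨le_rfl, hac⟩⟩
    ⟨hd, mk_mem_strip.2 ⟨le_rfl, hxb⟩⟩

namespace InitialAscent

variable {N : ℕ} {f : ℤ → ℤ} {i : ℤ}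

theorem lipschitz (hf : InitialAscent N f i) {x y : ℤ} (hxy : x ≤ y) :
    f y ≤ f x + (y - x) ∧ f x ≤ f y + (y - x) := by
  induction y, hxy using Int.leInduction with
  | base => omega
  | succ y _ ih =>
    have := hf.step y
    omega

theorem lt_fst (hf : InitialAscent N f i) {p : ℤ × ℤ} (hp : p ∈ boxesAbove N f) : i < p.1 := by
  have := mem_boxesAbove.1 hp
  have := hf.eq_self p.1
  omega

theorem strip_subset (hf : InitialAscent N f i) {a b : ℤ} (ha : i < a) (hfa : -1 ≤ f a)
    (hb : b ∈ arcEnds N f a) : ∀ p ∈ strip f a b, p ∈ boxesAbove N f := by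
  intro p hp
  obtain ⟨hap, hpb, hp⟩ := mem_strip.1 hp
  obtain ⟨harc, hbN⟩ := mem_arcEnds.1 hb
  have := hf.nonneg; have := hf.down; have := hf.even p.1
  have := harc.ge p.1 hap hpb
  have := hf.lipschitz hpb
  have := hf.lipschitz (show i + 1 ≤ p.1 by omega)
  rw [mem_boxesAbove]
  omega

theorem strip_first_subset (hf : InitialAscent N f i) {c : ℤ} (hc : c ∈ arcEnds N f (i + 1)) :
    ∀ p ∈ strip f (i + 1) c, p ∈ boxesAbove N f :=
  hf.strip_subset (by omega) (by have := hf.nonneg; have := hf.down; omega) hc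

theorem existsUnique_first (hf : InitialAscent N f i) {T : Finset (Finset (ℤ × ℤ))}
    (hT : T ∈ tilings N f) : ∃! c, c ∈ arcEnds N f (i + 1) ∧ strip f (i + 1) c ∈ T := by
  have := hf.nonneg; have := hf.lt; have := hf.down
  refine existsUnique_mem_arcEnds hT (mem_boxesAbove.2 (by dsimp only; omega))
    fun a b ha hb hd => ?_
  have := hf.lt_fst ((mem_tilings.1 hT).1.subset _ hd _ (mk_mem_strip.2 ⟨le_rfl, by omega⟩))
  dsimp only at this
  omega

theorem existsUnique_second (hf : InitialAscent N f i) (hi : 1 ≤ i) {c : ℤ}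
    (hc : c ∈ arcEnds N f (i + 1)) (hdown : f (c + 1) = f c - 1) {T : Finset (Finset (ℤ × ℤ))}
    (hT : T ∈ tilings N f) (hcT : strip f (i + 1) c ∈ T) :
    ∃! b, b ∈ arcEnds N f (c + 1) ∧ strip f (c + 1) b ∈ T := by
  have htiling := (mem_tilings.1 hT).1
  obtain ⟨harc, hcN⟩ := mem_arcEnds.1 hc
  have := hf.down; have := harc.le; have := harc.ends; have := hf.even c
  refine existsUnique_mem_arcEnds hT (mem_boxesAbove.2 (by dsimp only; omega))
    fun a b ha hb hd => ?_
  by_contra hne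
  have hcS : (c, f c + 1) ∈ strip f (i + 1) c := mk_mem_strip.2 ⟨harc.le, le_rfl⟩
  have heq : strip f a b = strip f (i + 1) c :=
    (htiling.existsUnique _ (hf.strip_first_subset hc _ hcS)).unique
      ⟨hd, mk_mem_strip.2 ⟨by omega, by omega⟩⟩ ⟨hcT, hcS⟩
  have := mk_mem_strip.1
    (heq ▸ mk_mem_strip.2 ⟨ha, hb⟩ : (c + 1, f (c + 1) + 1) ∈ strip f (i + 1) c)
  omega

theorem tileWeight_first (hf : InitialAscent N f i) {c : ℤ} (hc : c ∈ arcEnds N f (i + 1)) :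
    tileWeight (strip f (i + 1) c) = qInt i / qInt (i + 1) := by
  rw [(mem_arcEnds.1 hc).1.tileWeight_strip, hf.down]
  ring_nf

theorem weightSum_tilings (hf : InitialAscent N f i) :
    weightSum (tilings N f) = qInt i / qInt (i + 1) *
      ∑ c ∈ arcEnds N f (i + 1), weightSum ((tilings N f).memberSubfamily (strip f (i + 1) c)) := by
  rw [Finset.mul_sum, weightSum,
    sum_prod_eq_sum_memberSubfamily tileWeight fun T hT => hf.existsUnique_first hT]
  exact Finset.sum_congr rfl fun c hc => by rw [hf.tileWeight_first hc, weightSum]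

theorem weightSum_memberSubfamily (hf : InitialAscent N f i) (hi : 1 ≤ i) {c : ℤ}
    (hc : c ∈ arcEnds N f (i + 1)) (hdown : f (c + 1) = f c - 1) :
    weightSum ((tilings N f).memberSubfamily (strip f (i + 1) c)) = qInt (i - 1) / qInt i *
      ∑ b ∈ arcEnds N f (c + 1), weightSum
        (((tilings N f).memberSubfamily (strip f (i + 1) c)).memberSubfamily
          (strip f (c + 1) b)) := by
  have hsecond : ∀ R ∈ (tilings N f).memberSubfamily (strip f (i + 1) c),
      ∃! b, b ∈ arcEnds N f (c + 1) ∧ strip f (c + 1) b ∈ R := by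
    intro R hR
    obtain ⟨b, ⟨hb, hbT⟩, hunique⟩ := hf.existsUnique_second hi hc hdown
      (Finset.mem_memberSubfamily.1 hR).1 (Finset.mem_insert_self _ _)
    refine ⟨b, ⟨hb, Finset.mem_of_mem_insert_of_ne hbT fun heq => ?_⟩,
      fun e he => hunique e ⟨he.1, Finset.mem_insert_of_mem he.2⟩⟩
    have hmem : (c + 1, f (c + 1) + 1) ∈ strip f (c + 1) b :=
      mk_mem_strip.2 ⟨le_rfl, (mem_arcEnds.1 hb).1.le⟩
    have := mk_mem_strip.1 (heq ▸ hmem)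
    omega
  rw [Finset.mul_sum, weightSum, sum_prod_eq_sum_memberSubfamily tileWeight hsecond]
  refine Finset.sum_congr rfl fun b hb => ?_
  rw [(mem_arcEnds.1 hb).1.tileWeight_strip, hdown, (mem_arcEnds.1 hc).1.ends, hf.down, weightSum]
  ring_nf

end InitialAscent

/-! ### Removing a bottom tile -/

theorem mem_memberSubfamily_strip {N : ℕ} {f : ℤ → ℤ} {a b : ℤ} {R : Finset (Finset (ℤ × ℤ))}
    (harc : IsDyckArc f a b) (hsub : ∀ p ∈ strip f a b, p ∈ boxesAbove N f) :
    R ∈ (tilings N f).memberSubfamily (strip f a b) ↔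
      IsTiling (boxesAbove N f \ strip f a b) R ∧
        ∀ d ∈ R, IsSupported f (insert (strip f a b) R) d := by
  have hlow : IsSupported f (insert (strip f a b) R) (strip f a b) := by
    refine .inl fun p hp => ?_
    have := (mem_strip.1 hp).2.2
    omega
  rw [Finset.mem_memberSubfamily, mem_tilings, ← isTiling_insert_iff harc.isDyckTile hsub,
    Finset.forall_mem_insert, and_iff_right hlow, and_right_comm]

theorem mem_memberSubfamily_strip_strip {N : ℕ} {f : ℤ → ℤ} {a b a' b' : ℤ}
    {R : Finset (Finset (ℤ × ℤ))} (harc : IsDyckArc f a b) (harc' : IsDyckArc f a' b')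
    (hsub : ∀ p ∈ strip f a b, p ∈ boxesAbove N f)
    (hsub' : ∀ p ∈ strip f a' b', p ∈ boxesAbove N f \ strip f a b) :
    R ∈ ((tilings N f).memberSubfamily (strip f a b)).memberSubfamily (strip f a' b') ↔
      IsTiling ((boxesAbove N f \ strip f a b) \ strip f a' b') R ∧
        ∀ d ∈ R, IsSupported f (insert (strip f a b) (insert (strip f a' b') R)) d := by
  have hlow : IsSupported f (insert (strip f a b) (insert (strip f a' b') R)) (strip f a' b') := by
    refine .inl fun p hp => ?_
    have := (mem_strip.1 hp).2.2
    omega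
  rw [Finset.mem_memberSubfamily, mem_memberSubfamily_strip harc hsub,
    ← isTiling_insert_iff harc'.isDyckTile hsub', Finset.forall_mem_insert, and_iff_right hlow,
    and_right_comm]

/-- The height function `f` pushed up by `2` over the columns `a, …, c`. -/
def raise (f : ℤ → ℤ) (a c : ℤ) (x : ℤ) : ℤ := if a ≤ x ∧ x ≤ c then f x + 2 else f x

theorem boxesAbove_raise {N : ℕ} {f : ℤ → ℤ} (heven : ∀ x, (f x + x) % 2 = 0) (a c : ℤ) :
    boxesAbove N (raise f a c) = boxesAbove N f \ strip f a c := by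
  ext p
  rw [Set.mem_sdiff, Finset.mem_coe, mem_strip, mem_boxesAbove, mem_boxesAbove, raise]
  have := heven p.1
  split_ifs <;> omega

/-- A tile of height one more than `raise f a c` that leaves `[a, c]` to the right would have to
descend below its left end. -/
theorem forall_lt_raise_iff {f : ℤ → ℤ} {a c : ℤ} {d : Finset (ℤ × ℤ)} (hd : IsDyckTile d)
    (harc : IsDyckArc f a c) (hup : f (c + 1) = f c + 1) (hcol : ∀ p ∈ d, a ≤ p.1)
    (habove : ∀ p ∈ d, raise f a c p.1 < p.2) :
    (∀ p ∈ d, p.2 - 2 < raise f a c p.1) ↔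
      (∀ p ∈ d, p.2 - 2 < f p.1) ∨ ∀ p ∈ d, (p.1, p.2 - 2) ∈ strip f a c := by
  constructor
  · intro hlow
    obtain ⟨a', b', harc', rfl⟩ := hd.exists_eq_strip (g := raise f a c) fun p hp => by
      have := hlow p hp; have := habove p hp
      omega
    have ha' := hcol _ (mk_mem_strip.2 ⟨le_rfl, harc'.le⟩)
    by_cases ha'c : a' ≤ c
    · have hb'c : b' ≤ c := by
        by_contra! hcb'
        have := harc.ends
        have := harc.ge a' ha' ha'c
        have := harc'.ge (c + 1) (by omega) (by omega)
        simp only [raise] at this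
        split_ifs at this <;> omega
      refine .inr fun p hp => ?_
      obtain ⟨hap, hpb, hp⟩ := mem_strip.1 hp
      rw [raise, if_pos (by omega)] at hp
      exact mem_strip.2 ⟨by dsimp only; omega, by dsimp only; omega, by dsimp only; omega⟩
    · refine .inl fun p hp => ?_
      obtain ⟨hap, -, hp⟩ := mem_strip.1 hp
      rw [raise, if_neg (by omega)] at hp
      omega
  · rintro (hlow | hshift) p hp
    · have := hlow p hp
      rw [raise]
      split_ifs <;> omega
    · obtain ⟨hap, hpc, hpf⟩ := mem_strip.1 (hshift p hp)
      dsimp only at hap hpc hpf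
      rw [raise, if_pos ⟨hap, hpc⟩]
      omega

/-- A tile lying on two adjacent bottom tiles, the second of them one step lower, would dip below
its left end. -/
theorem forall_shift_mem_strip_iff {f : ℤ → ℤ} {a b c : ℤ} {d : Finset (ℤ × ℤ)}
    (hd : IsDyckTile d) (harc : IsDyckArc f a c) (hdown : f (c + 1) = f c - 1) (hcb : c + 1 ≤ b) :
    (∀ p ∈ d, (p.1, p.2 - 2) ∈ strip f a b) ↔
      (∀ p ∈ d, (p.1, p.2 - 2) ∈ strip f a c) ∨ ∀ p ∈ d, (p.1, p.2 - 2) ∈ strip f (c + 1) b := by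
  have := harc.le
  simp only [mem_strip]
  constructor
  · intro hshift
    obtain ⟨a', b', harc', rfl⟩ := hd.exists_eq_strip (g := fun x => f x + 2) fun p hp => by
      have := hshift p hp
      omega
    have ha' := hshift _ (mk_mem_strip.2 ⟨le_rfl, harc'.le⟩)
    have hb' := hshift _ (mk_mem_strip.2 ⟨harc'.le, le_rfl⟩)
    dsimp only at ha' hb'
    have hcross : b' ≤ c ∨ c + 1 ≤ a' := by
      by_contra! hcross
      have := harc.ge a' ha'.1 (by omega)
      have := harc'.ge (c + 1) (by omega) (by omega)
      have := harc.ends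
      omega
    refine hcross.imp (fun h p hp => ?_) fun h p hp => ?_ <;>
    · have := hshift p hp
      have := mem_strip.1 hp
      omega
  · rintro (hshift | hshift) p hp <;>
    · have := hshift p hp
      omega

theorem InitialAscent.memberSubfamily_eq_tilings_raise {N : ℕ} {f : ℤ → ℤ} {i c : ℤ}
    (hf : InitialAscent N f i) (hc : c ∈ arcEnds N f (i + 1)) (hup : f (c + 1) = f c + 1) :
    (tilings N f).memberSubfamily (strip f (i + 1) c) = tilings N (raise f (i + 1) c) := by
  have harc := (mem_arcEnds.1 hc).1
  ext R
  rw [mem_memberSubfamily_strip harc (hf.strip_first_subset hc), mem_tilings,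
    boxesAbove_raise hf.even]
  refine and_congr_right fun hR => forall₂_congr fun d hd => ?_
  simp only [IsSupported, Finset.exists_mem_insert]
  rw [← or_assoc, forall_lt_raise_iff (hR.tile d hd) harc hup]
  · exact fun p hp => hf.lt_fst (hR.subset d hd p hp).1
  · intro p hp
    have := hR.subset d hd p hp
    rw [← boxesAbove_raise hf.even] at this
    exact (mem_boxesAbove.1 this).2.2.2.1

theorem arcEnds_eq_of_down {N : ℕ} {f : ℤ → ℤ} {a b c : ℤ} (hb : b ∈ arcEnds N f a)
    (hc : c ∈ arcEnds N f a) (hbdown : f (b + 1) = f b - 1) (hcdown : f (c + 1) = f c - 1) :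
    b = c := by
  obtain ⟨⟨hab, hfb, -, hgeb⟩, -⟩ := mem_arcEnds.1 hb
  obtain ⟨⟨hac, hfc, -, hgec⟩, -⟩ := mem_arcEnds.1 hc
  have := hgeb (c + 1); have := hgec (b + 1)
  omega

/-- The height function `f` with the peak that ends its initial ascent of length `i` flipped to a
valley. -/
def lowerPeak (f : ℤ → ℤ) (i : ℤ) : ℤ → ℤ := Function.update f i (i - 2)

theorem lowerPeak_self (f : ℤ → ℤ) (i : ℤ) : lowerPeak f i i = i - 2 := Function.update_self ..

theorem lowerPeak_of_ne (f : ℤ → ℤ) {i x : ℤ} (h : x ≠ i) : lowerPeak f i x = f x :=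
  Function.update_of_ne h ..

namespace InitialAscent

variable {N : ℕ} {f : ℤ → ℤ} {i b c : ℤ}

theorem raise_lowerPeak (hf : InitialAscent N f i) : raise (lowerPeak f i) i i = f := by
  ext x
  rcases eq_or_ne x i with rfl | hx
  · have := hf.eq_self x hf.nonneg le_rfl
    rw [raise, if_pos ⟨le_rfl, le_rfl⟩, lowerPeak_self]
    omega
  · rw [raise, if_neg (by omega), lowerPeak_of_ne f hx]

theorem lower (hf : InitialAscent N f i) (hi : 1 ≤ i) :
    InitialAscent N (lowerPeak f i) (i - 1) where
  nonneg := by omega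
  lt := by have := hf.lt; omega
  eq_self x hx hxi := by
    rw [lowerPeak_of_ne f (by omega)]
    exact hf.eq_self x hx (by omega)
  down := by rw [sub_add_cancel, lowerPeak_self]; omega
  step x := by
    have := hf.down; have := hf.eq_self (i - 1) (by omega) (by omega)
    rcases eq_or_ne x i with rfl | hx
    · rw [lowerPeak_self, lowerPeak_of_ne f (by omega)]
      omega
    rcases eq_or_ne (x + 1) i with rfl | hx'
    · rw [lowerPeak_self, lowerPeak_of_ne f hx]
      rw [add_sub_cancel_right] at this
      omega
    · rw [lowerPeak_of_ne f hx, lowerPeak_of_ne f hx']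
      exact hf.step x
  even x := by
    rcases eq_or_ne x i with rfl | hx
    · rw [lowerPeak_self]
      omega
    · rw [lowerPeak_of_ne f hx]
      exact hf.even x

theorem isDyckArc_lowerPeak_iff (hf : InitialAscent N f i) (harc : IsDyckArc f (i + 1) c)
    (hdown : f (c + 1) = f c - 1) (hbi : b ≠ i) :
    IsDyckArc (lowerPeak f i) i b ↔ IsDyckArc f (c + 1) b := by
  have := hf.down; have := harc.le; have := harc.ends
  constructor
  · intro h
    have hib := h.le; have hfb := h.ends
    rw [lowerPeak_self, lowerPeak_of_ne f hbi] at hfb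
    have hcb : c < b := by
      by_contra! hbc
      have := harc.ge b (by omega) hbc
      omega
    refine ⟨hcb, by omega, fun x _ _ => hf.step x, fun x hcx hxb => ?_⟩
    have := h.ge x (by omega) hxb
    rw [lowerPeak_self, lowerPeak_of_ne f (by omega)] at this
    omega
  · intro h
    have := h.le; have := h.ends
    refine ⟨by omega, ?_, fun x hix _ => ?_, fun x hix hxb => ?_⟩
    · rw [lowerPeak_self, lowerPeak_of_ne f hbi]
      omega
    · rw [lowerPeak_of_ne f (show x + 1 ≠ i by omega)]
      rcases eq_or_ne x i with rfl | hx
      · rw [lowerPeak_self]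
        omega
      · rw [lowerPeak_of_ne f hx]
        exact hf.step x
    · rcases eq_or_ne x i with rfl | hx
      · exact le_rfl
      rw [lowerPeak_self, lowerPeak_of_ne f hx]
      by_cases hxc : x ≤ c
      · have := harc.ge x (by omega) hxc
        omega
      · have := h.ge x (by omega) hxb
        omega

theorem arcEnds_succ (hf : InitialAscent N f i) (hc : c ∈ arcEnds N f (i + 1))
    (hdown : f (c + 1) = f c - 1) :
    arcEnds N f (c + 1) = (arcEnds N (lowerPeak f i) i).erase i := by
  have harc := (mem_arcEnds.1 hc).1
  ext b
  rw [Finset.mem_erase, mem_arcEnds, mem_arcEnds]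
  rcases eq_or_ne b i with rfl | hbi
  · have := harc.le
    exact ⟨fun h => by have := h.1.le; omega, fun h => absurd rfl h.1⟩
  · rw [and_iff_right hbi, hf.isDyckArc_lowerPeak_iff harc hdown hbi, lowerPeak_of_ne f hbi]

/-- The witness is the column before the first one in which `f` falls below `i - 1`. -/
theorem exists_down (hf : InitialAscent N f i)
    (hb : b ∈ (arcEnds N (lowerPeak f i) i).erase i) :
    ∃ c ∈ arcEnds N f (i + 1), f (c + 1) = f c - 1 := by
  obtain ⟨hbi, hb⟩ := Finset.mem_erase.1 hb
  obtain ⟨h, hbN⟩ := mem_arcEnds.1 hb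
  have hib := h.le; have hfb := h.ends; have := hf.down
  rw [lowerPeak_of_ne f hbi] at hbN hfb
  rw [lowerPeak_self] at hfb
  obtain ⟨m, ⟨him, hfm⟩, hmin⟩ := Int.exists_least_of_bdd (P := fun x => i + 1 ≤ x ∧ f x ≤ i - 2)
    ⟨i + 1, fun x hx => hx.1⟩ ⟨b, by omega, by omega⟩
  have hge (x : ℤ) (hix : i + 1 ≤ x) (hxm : x < m) : i - 1 ≤ f x := by
    have := hmin x
    omega
  have hmi : m ≠ i + 1 := by rintro rfl; omega
  have := hmin b; have := hge (m - 1) (by omega) (by omega)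
  have hstep := hf.step (m - 1)
  rw [sub_add_cancel] at hstep
  refine ⟨m - 1, mem_arcEnds.2 ⟨⟨by omega, by omega, fun x _ _ => hf.step x, fun x hix hxm => ?_⟩,
    by omega⟩, by rw [sub_add_cancel]; omega⟩
  have := hge x hix (by omega)
  omega

theorem boxesAbove_lowerPeak (hf : InitialAscent N f i) (hi : 1 ≤ i) (hic : i ≤ c) (hcb : c ≤ b) :
    boxesAbove N (lowerPeak f i) \ strip (lowerPeak f i) i b =
      (boxesAbove N f \ strip f (i + 1) c) \ strip f (c + 1) b := by
  have hboxes := boxesAbove_raise (N := N) (hf.lower hi).even i i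
  rw [hf.raise_lowerPeak] at hboxes
  ext p
  simp only [hboxes, Set.mem_sdiff, Finset.mem_coe, and_assoc]
  refine and_congr_right fun _ => ?_
  simp only [mem_strip, lowerPeak, Function.update_apply]
  split_ifs <;> omega

theorem isSupported_lowerPeak_iff {d : Finset (ℤ × ℤ)} {R : Finset (Finset (ℤ × ℤ))}
    (hd : IsDyckTile d) (hcol : ∀ p ∈ d, i < p.1) (harc : IsDyckArc f (i + 1) c)
    (hdown : f (c + 1) = f c - 1) (hcb : c + 1 ≤ b) :
    IsSupported (lowerPeak f i) (insert (strip (lowerPeak f i) i b) R) d ↔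
      IsSupported f (insert (strip f (i + 1) c) (insert (strip f (c + 1) b) R)) d := by
  have hlow : (∀ p ∈ d, p.2 - 2 < lowerPeak f i p.1) ↔ ∀ p ∈ d, p.2 - 2 < f p.1 :=
    forall₂_congr fun p hp => by rw [lowerPeak_of_ne f (hcol p hp).ne']
  have hshift : (∀ p ∈ d, (p.1, p.2 - 2) ∈ strip (lowerPeak f i) i b) ↔
      ∀ p ∈ d, (p.1, p.2 - 2) ∈ strip f (i + 1) b := by
    refine forall₂_congr fun p hp => ?_
    have := hcol p hp
    simp only [mem_strip, lowerPeak_of_ne f this.ne']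
    omega
  simp only [IsSupported, Finset.exists_mem_insert]
  rw [hlow, hshift, forall_shift_mem_strip_iff hd harc hdown hcb, or_assoc]

theorem memberSubfamily_memberSubfamily_eq (hf : InitialAscent N f i) (hi : 1 ≤ i)
    (hc : c ∈ arcEnds N f (i + 1)) (hdown : f (c + 1) = f c - 1) (hb : b ∈ arcEnds N f (c + 1)) :
    ((tilings N f).memberSubfamily (strip f (i + 1) c)).memberSubfamily (strip f (c + 1) b) =
      (tilings N (lowerPeak f i)).memberSubfamily (strip (lowerPeak f i) i b) := by
  have hg := hf.lower hi
  have harc := (mem_arcEnds.1 hc).1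
  have harc' := (mem_arcEnds.1 hb).1
  have := harc.le; have := harc.ends; have := harc'.le; have := hf.down
  have hbE : b ∈ arcEnds N (lowerPeak f i) i :=
    (Finset.mem_erase.1 (hf.arcEnds_succ hc hdown ▸ hb)).2
  have hsub : ∀ p ∈ strip (lowerPeak f i) i b, p ∈ boxesAbove N (lowerPeak f i) :=
    hg.strip_subset (by omega) (by rw [lowerPeak_self]; omega) hbE
  have hsub' : ∀ p ∈ strip f (c + 1) b, p ∈ boxesAbove N f \ strip f (i + 1) c := by
    refine fun p hp => ⟨hf.strip_subset (by omega) (by omega) hb p hp, fun hpS => ?_⟩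
    have := mem_strip.1 hp; have := mem_strip.1 (Finset.mem_coe.1 hpS)
    omega
  have hboxes := hf.boxesAbove_lowerPeak hi (show i ≤ c by omega) (show c ≤ b by omega)
  ext R
  rw [mem_memberSubfamily_strip_strip harc harc' (hf.strip_first_subset hc) hsub',
    mem_memberSubfamily_strip (mem_arcEnds.1 hbE).1 hsub, hboxes]
  refine and_congr_right fun hR => forall₂_congr fun d hd => ?_
  exact (isSupported_lowerPeak_iff (hR.tile d hd)
    (fun p hp => hf.lt_fst (hR.subset d hd p hp).1.1) harc hdown harc'.le).symm

theorem weightSum_lowerPeak (hf : InitialAscent N f i) (hi : 1 ≤ i) :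
    weightSum (tilings N (lowerPeak f i)) = qInt (i - 1) / qInt i * (weightSum (tilings N f) +
      ∑ b ∈ (arcEnds N (lowerPeak f i) i).erase i, weightSum
        ((tilings N (lowerPeak f i)).memberSubfamily (strip (lowerPeak f i) i b))) := by
  have hg := hf.lower hi
  have hi_mem : i ∈ arcEnds N (lowerPeak f i) i := by
    refine mem_arcEnds.2 ⟨⟨le_rfl, rfl, fun x _ _ => by omega, fun x _ _ => ?_⟩, ?_⟩
    · rw [show x = i by omega]
    · have := hf.lt
      rw [lowerPeak_self]
      omega
  have hup : lowerPeak f i (i + 1) = lowerPeak f i i + 1 := by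
    rw [lowerPeak_self, lowerPeak_of_ne f (by omega), hf.down]
    ring
  have hlink := hg.memberSubfamily_eq_tilings_raise (by rwa [sub_add_cancel]) hup
  rw [sub_add_cancel, hf.raise_lowerPeak] at hlink
  rw [hg.weightSum_tilings, sub_add_cancel, ← Finset.add_sum_erase _ _ hi_mem, hlink]

theorem sum_weightSum_memberSubfamily_down (hf : InitialAscent N f i) (hi : 1 ≤ i) :
    ∑ c ∈ arcEnds N f (i + 1) with f (c + 1) ≠ f c + 1,
        weightSum ((tilings N f).memberSubfamily (strip f (i + 1) c)) =
      qInt (i - 1) / qInt i * ∑ b ∈ (arcEnds N (lowerPeak f i) i).erase i, weightSum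
        ((tilings N (lowerPeak f i)).memberSubfamily (strip (lowerPeak f i) i b)) := by
  have hdown_of_mem {c : ℤ} (hc : c ∈ (arcEnds N f (i + 1)).filter fun c => f (c + 1) ≠ f c + 1) :
      c ∈ arcEnds N f (i + 1) ∧ f (c + 1) = f c - 1 :=
    ⟨(Finset.mem_filter.1 hc).1, (hf.step c).resolve_left (Finset.mem_filter.1 hc).2⟩
  by_cases h : ∃ c ∈ arcEnds N f (i + 1), f (c + 1) = f c - 1
  · obtain ⟨c, hc, hdown⟩ := h
    have hsingle : ((arcEnds N f (i + 1)).filter fun c => f (c + 1) ≠ f c + 1) = {c} :=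
      Finset.eq_singleton_iff_unique_mem.2 ⟨Finset.mem_filter.2 ⟨hc, by omega⟩,
        fun b hb => arcEnds_eq_of_down (hdown_of_mem hb).1 hc (hdown_of_mem hb).2 hdown⟩
    rw [hsingle, Finset.sum_singleton, hf.weightSum_memberSubfamily hi hc hdown,
      ← hf.arcEnds_succ hc hdown]
    congr 1
    exact Finset.sum_congr rfl fun b hb =>
      congrArg weightSum (hf.memberSubfamily_memberSubfamily_eq hi hc hdown hb)
  · have hempty : (arcEnds N (lowerPeak f i) i).erase i = ∅ :=
      Finset.eq_empty_of_forall_notMem fun b hb => h (hf.exists_down hb)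
    rw [hempty, Finset.sum_empty, mul_zero]
    exact Finset.sum_eq_zero fun c hc => absurd ⟨c, hdown_of_mem hc⟩ h

end InitialAscent

/-! ### Quantum integers -/

theorem qInt_zero : qInt 0 = 0 := by simp only [qInt, zpow_zero, sub_self, zero_div]

theorem inftyValuation_qA_zpow (m : ℤ) : RatFunc.inftyValuation ℂ (qA ^ m) = WithZero.exp m :=
  RatFunc.inftyValuation.X_zpow ℂ m

theorem inftyValuation_qInt {n : ℤ} (hn : 0 < n) :
    RatFunc.inftyValuation ℂ (qInt n) = WithZero.exp (n - 1) := by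
  have hnum {m : ℤ} (hm : 0 < m) :
      RatFunc.inftyValuation ℂ (qA ^ m - qA⁻¹ ^ m) = WithZero.exp m := by
    rw [Valuation.map_sub_eq_of_lt_left, inftyValuation_qA_zpow]
    rw [inv_zpow', inftyValuation_qA_zpow, inftyValuation_qA_zpow, WithZero.exp_lt_exp]
    omega
  have hden := hnum one_pos
  rw [zpow_one, zpow_one] at hden
  rw [qInt, map_div₀, hnum hn, hden, WithZero.exp_sub]

theorem qInt_ne_zero {n : ℤ} (hn : 0 < n) : qInt n ≠ 0 := by
  rw [← (RatFunc.inftyValuation ℂ).ne_zero_iff, inftyValuation_qInt hn]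
  exact WithZero.exp_ne_zero

theorem one_lt_inftyValuation_qInt_two : 1 < RatFunc.inftyValuation ℂ (qInt 2) := by
  rw [inftyValuation_qInt two_pos, ← WithZero.exp_zero, WithZero.exp_lt_exp]
  norm_num

theorem qInt_two_mul (n : ℤ) : qInt 2 * qInt n = qInt (n + 1) + qInt (n - 1) := by
  have hq : qA ≠ 0 := RatFunc.X_ne_zero
  have hden : qA - qA⁻¹ ≠ 0 := by
    intro h
    apply qInt_ne_zero one_pos
    rw [qInt, zpow_one, zpow_one, h, div_zero]
  rw [qInt, qInt, qInt, qInt, div_mul_div_comm, ← add_div,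
    div_eq_div_iff (mul_ne_zero hden hden) hden]
  simp only [inv_zpow, zpow_add₀ hq, zpow_sub₀ hq, zpow_ofNat]
  field_simp
  ring

theorem qInt_two_mul_weightSum_tilings {N : ℕ} {f : ℤ → ℤ} {i : ℤ} (hf : InitialAscent N f i)
    (hi : 1 ≤ i) :
    qInt 2 * weightSum (tilings N f) = weightSum (tilings N (lowerPeak f i)) +
      ∑ c ∈ arcEnds N f (i + 1) with f (c + 1) = f c + 1,
        weightSum (tilings N (raise f (i + 1) c)) := by
  set Z := weightSum (tilings N f)
  set A := ∑ c ∈ arcEnds N f (i + 1) with f (c + 1) = f c + 1,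
    weightSum (tilings N (raise f (i + 1) c))
  set B := ∑ b ∈ (arcEnds N (lowerPeak f i) i).erase i, weightSum
    ((tilings N (lowerPeak f i)).memberSubfamily (strip (lowerPeak f i) i b))
  have hi₀ := qInt_ne_zero (show 0 < i by omega)
  have hi₁ := qInt_ne_zero (show 0 < i + 1 by omega)
  have hZ : qInt (i + 1) * Z = qInt i * A + qInt (i - 1) * B := by
    have hup : ∑ c ∈ arcEnds N f (i + 1) with f (c + 1) = f c + 1,
        weightSum ((tilings N f).memberSubfamily (strip f (i + 1) c)) = A :=
      Finset.sum_congr rfl fun c hc => congrArg weightSum <|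
        hf.memberSubfamily_eq_tilings_raise (Finset.mem_filter.1 hc).1 (Finset.mem_filter.1 hc).2
    have hfirst : Z = qInt i / qInt (i + 1) * (A + qInt (i - 1) / qInt i * B) := by
      rw [← hup, ← hf.sum_weightSum_memberSubfamily_down hi, Finset.sum_filter_add_sum_filter_not]
      exact hf.weightSum_tilings
    rw [hfirst]
    field_simp
  rw [hf.weightSum_lowerPeak hi]
  apply mul_left_cancel₀ hi₀
  field_simp
  linear_combination Z * qInt_two_mul i + hZ

theorem InitialAscent.weightSum_tilings_eq_zero {N : ℕ} {f : ℤ → ℤ} (hf : InitialAscent N f 0) :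
    weightSum (tilings N f) = 0 := by
  rw [hf.weightSum_tilings, qInt_zero, zero_div, zero_mul]

/-! ### Heights of words -/

open List (replicate)

theorem pht_of_nonpos (w : List Bool) {x : ℤ} (hx : x ≤ 0) : pht w x = -x := by
  simp [pht, Int.toNat_of_nonpos hx]

theorem pht_even (w : List Bool) (x : ℤ) : (pht w x + x) % 2 = 0 := by
  rw [pht]
  omega

theorem pht_natCast_add_one (w : List Bool) (m : ℕ) :
    pht w (m + 1) = pht w m + if w[m]? = some true then 1 else -1 := by
  rw [pht, pht, Int.toNat_natCast, show ((m : ℤ) + 1).toNat = m + 1 by omega, List.take_add_one,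
    List.count_append]
  rcases w[m]? with _ | _ | _ <;>
    simp only [Option.toList_none, Option.toList_some, List.count_nil, List.count_singleton,
      beq_true, Option.some.injEq, reduceCtorEq, Bool.false_eq_true, if_true, if_false,
      Nat.cast_add, Nat.cast_zero, Nat.cast_one] <;>
    ring

theorem pht_natCast_add_one_eq_iff (w : List Bool) (m : ℕ) :
    pht w (m + 1) = pht w m + 1 ↔ w[m]? = some true := by
  rw [pht_natCast_add_one, add_right_inj]
  split_ifs with h <;> simp [h]

theorem pht_add_one (w : List Bool) (x : ℤ) :
    pht w (x + 1) = pht w x + 1 ∨ pht w (x + 1) = pht w x - 1 := by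
  rcases le_or_gt 0 x with hx | hx
  · lift x to ℕ using hx
    rw [pht_natCast_add_one]
    split_ifs
    exacts [.inl rfl, .inr rfl]
  · rw [pht_of_nonpos w hx, pht_of_nonpos w hx.le]
    omega

theorem pht_cons (b : Bool) (w : List Bool) {x : ℤ} (hx : 0 ≤ x) :
    pht (b :: w) (x + 1) = pht w x + if b then 1 else -1 := by
  rw [pht, pht, show (x + 1).toNat = x.toNat + 1 by omega, List.take_succ_cons, List.count_cons]
  cases b <;>
    simp only [beq_true, Bool.false_eq_true, if_true, if_false, Nat.cast_add, Nat.cast_zero,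
      Nat.cast_one] <;>
    ring

theorem pht_replicate_true_append (k : ℕ) (w : List Bool) (x : ℤ) :
    pht (replicate k true ++ w) x = if x ≤ k then |x| else k + pht w (x - k) := by
  induction k generalizing x with
  | zero =>
    split_ifs with hx
    · rw [pht_of_nonpos _ (by simpa using hx), abs_of_nonpos (by simpa using hx)]
    · simp
  | succ k ih =>
    rcases le_or_gt x 0 with hx | hx
    · rw [pht_of_nonpos _ hx, if_pos (by omega), abs_of_nonpos hx]
    · obtain ⟨x, rfl⟩ : ∃ y, x = y + 1 := ⟨x - 1, by ring⟩
      have hx₀ : 0 ≤ x := by omega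
      rw [List.replicate_succ, List.cons_append, pht_cons _ _ hx₀, ih]
      push_cast
      simp only [add_le_add_iff_right, abs_of_nonneg hx₀, abs_of_nonneg hx.le,
        add_sub_add_right_eq_sub, if_true]
      split_ifs <;> ring

theorem pht_set_false {w : List Bool} {m : ℕ} (hm : w[m]? = some true) (x : ℤ) :
    pht (w.set m false) x = pht w x - if (m : ℤ) < x then 2 else 0 := by
  obtain ⟨hlt, -⟩ := List.getElem?_eq_some_iff.1 hm
  rcases le_or_gt x 0 with hx | hx
  · rw [pht_of_nonpos _ hx, pht_of_nonpos _ hx, if_neg (by omega), sub_zero]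
  lift x to ℕ using hx.le
  clear hx
  induction x with
  | zero => simp [pht_of_nonpos]
  | succ x ih =>
    push_cast
    rw [pht_natCast_add_one, pht_natCast_add_one, ih]
    rcases lt_trichotomy m x with h | rfl | h
    · rw [List.getElem?_set_ne h.ne]
      split_ifs <;> omega
    · simp only [List.getElem?_set_self hlt, hm, lt_irrefl, lt_add_one, Option.some.injEq,
        Bool.false_eq_true, if_true, if_false]
      ring
    · rw [List.getElem?_set_ne h.ne']
      split_ifs <;> omega

theorem pht_length (w : List Bool) : pht w w.length = w.count true - w.count false := by
  have := w.count_true_add_count_false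
  rw [pht, Int.toNat_natCast, List.take_length]
  omega

theorem pht_replicate_false (n : ℕ) (x : ℤ) : pht (replicate n false) x = -x := by
  simp [pht, List.count_replicate]

theorem initialAscent_pht {N k : ℕ} (hk : k < N) (w : List Bool) :
    InitialAscent N (pht (replicate k true ++ false :: w)) k where
  nonneg := by omega
  lt := by omega
  eq_self x hx hxk := by rw [pht_replicate_true_append, if_pos hxk, abs_of_nonneg hx]
  down := by
    rw [pht_replicate_true_append, if_neg (by omega), add_sub_cancel_left, ← zero_add (1 : ℤ),
      pht_cons _ _ le_rfl, pht_of_nonpos _ le_rfl, neg_zero, zero_add, if_neg Bool.false_ne_true,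
      zero_add, sub_eq_add_neg]
  step := pht_add_one _
  even := pht_even _

theorem pht_replicate_true_append_false_cons (k : ℕ) (w : List Bool) {y : ℤ} (hy : 0 ≤ y) :
    pht (replicate (k + 1) true ++ false :: w) (k + 2 + y) = k + pht w y := by
  rw [pht_replicate_true_append, if_neg (by push_cast; omega),
    show (k + 2 + y - (k + 1 : ℕ) : ℤ) = y + 1 by push_cast; ring, pht_cons _ _ hy]
  push_cast
  ring

theorem lowerPeak_pht (k : ℕ) (w : List Bool) :
    lowerPeak (pht (replicate (k + 1) true ++ false :: w)) (k + 1) =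
      pht (replicate k true ++ false :: true :: w) := by
  ext x
  rcases lt_trichotomy x (k + 1) with hx | rfl | hx
  · rw [lowerPeak_of_ne _ hx.ne, pht_replicate_true_append, pht_replicate_true_append,
      if_pos (by push_cast; omega), if_pos (by omega)]
  · have := (initialAscent_pht (Nat.lt_succ_self k) (true :: w)).down
    rw [lowerPeak_self, this]
    ring
  · obtain ⟨y, rfl⟩ : ∃ y, x = k + 2 + y := ⟨x - (k + 2), by ring⟩
    have hy : 0 ≤ y := by omega
    rw [lowerPeak_of_ne _ hx.ne', pht_replicate_true_append_false_cons _ _ hy,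
      pht_replicate_true_append, if_neg (by omega), show (k + 2 + y - k : ℤ) = y + 1 + 1 by ring,
      pht_cons _ _ (by omega), pht_cons _ _ hy]
    simp

theorem raise_pht (k : ℕ) {w : List Bool} {m : ℕ} (hm : w[m]? = some true) :
    raise (pht (replicate (k + 1) true ++ false :: w)) (k + 2) (k + 2 + m) =
      pht (replicate (k + 2) true ++ w.set m false) := by
  ext x
  rw [pht_replicate_true_append, raise]
  rcases lt_or_ge x (k + 2) with hx | hx
  · rw [if_neg (by omega), pht_replicate_true_append, if_pos (by push_cast; omega),
      if_pos (by push_cast; omega)]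
  · obtain ⟨y, rfl⟩ : ∃ y, x = k + 2 + y := ⟨x - (k + 2), by ring⟩
    have hy : 0 ≤ y := by omega
    rw [pht_replicate_true_append_false_cons _ _ hy]
    push_cast
    rw [add_sub_cancel_left, pht_set_false hm]
    rcases hy.eq_or_lt with rfl | hy'
    · rw [pht_of_nonpos _ le_rfl, abs_of_nonneg (by omega)]
      split_ifs <;> omega
    · split_ifs <;> omega

/-! ### Flips of words -/

/-- The positions of the up steps of `w` that leave height `0` when `w` is drawn from height `h`,
restricted to the part of `w` before it first goes below height `0`. -/
def returns (h : ℤ) (w : List Bool) : Finset ℕ :=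
  (Finset.range w.length).filter fun m =>
    w[m]? = some true ∧ h + pht w m = 0 ∧ ∀ l : ℕ, l ≤ m → 0 ≤ h + pht w l

theorem mem_returns {h : ℤ} {w : List Bool} {m : ℕ} :
    m ∈ returns h w ↔ w[m]? = some true ∧ h + pht w m = 0 ∧ ∀ l : ℕ, l ≤ m → 0 ≤ h + pht w l := by
  simp only [returns, Finset.mem_filter, Finset.mem_range, and_iff_right_iff_imp]
  exact fun hm => (List.getElem?_eq_some_iff.1 hm.1).1

/-- The sum of `F` over the words obtained from `w` by flipping one up step of `returns h w`. -/
def flipSum {M : Type*} [AddCommMonoid M] (h : ℤ) (w : List Bool) (F : List Bool → M) : M :=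
  ∑ m ∈ returns h w, F (w.set m false)

/-- A word with `N` up and `N` down steps. -/
def IsBalanced (N : ℕ) (w : List Bool) : Prop := w.count true = N ∧ w.count false = N

theorem IsBalanced.length_eq {N : ℕ} {w : List Bool} (hw : IsBalanced N w) :
    w.length = 2 * N := by
  rw [← w.count_true_add_count_false, hw.1, hw.2, two_mul]

theorem IsBalanced.pht_eq_zero {N : ℕ} {w : List Bool} (hw : IsBalanced N w) :
    pht w (2 * N) = 0 := by
  have := pht_length w
  rw [hw.length_eq, hw.1, hw.2, sub_self] at this
  exact_mod_cast this

theorem isDyckArc_pht_iff (k : ℕ) (w : List Bool) (m : ℕ) :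
    IsDyckArc (pht (replicate (k + 1) true ++ false :: w)) (k + 2) (k + 2 + m) ↔
      pht w m = 0 ∧ ∀ l : ℕ, l ≤ m → 0 ≤ pht w l := by
  have hf (l : ℕ) := pht_replicate_true_append_false_cons k w l.cast_nonneg
  have hstart := hf 0
  rw [Nat.cast_zero, add_zero, pht_of_nonpos _ le_rfl, neg_zero] at hstart
  constructor
  · intro harc
    refine ⟨?_, fun l hl => ?_⟩
    · have := harc.ends; have := hf m
      omega
    · have := harc.ge (k + 2 + l) (by omega) (by omega); have := hf l
      omega
  · rintro ⟨hm₀, hge⟩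
    refine ⟨by omega, by rw [hf, hstart, hm₀], fun x _ _ => pht_add_one _ x, fun x hx hxm => ?_⟩
    obtain ⟨l, rfl⟩ : ∃ l : ℕ, x = k + 2 + l := ⟨(x - (k + 2)).toNat, by omega⟩
    have := hge l (by omega)
    rw [hf, hstart]
    omega

theorem filter_arcEnds_eq_image_returns {N k : ℕ} (hk : k + 1 < N) {w : List Bool}
    (hw : IsBalanced N (replicate (k + 1) true ++ false :: w)) :
    ((arcEnds N (pht (replicate (k + 1) true ++ false :: w)) (k + 2)).filter fun c =>
        pht (replicate (k + 1) true ++ false :: w) (c + 1) =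
          pht (replicate (k + 1) true ++ false :: w) c + 1) =
      (returns 0 w).image fun m : ℕ => (k + 2 + m : ℤ) := by
  have hf (m : ℕ) := pht_replicate_true_append_false_cons k w m.cast_nonneg
  have hup (m : ℕ) : pht (replicate (k + 1) true ++ false :: w) (k + 2 + m + 1) =
      pht (replicate (k + 1) true ++ false :: w) (k + 2 + m) + 1 ↔ w[m]? = some true := by
    rw [← pht_natCast_add_one_eq_iff, add_assoc, hf,
      pht_replicate_true_append_false_cons k w (by omega), add_assoc, add_right_inj]
  ext c
  simp only [Finset.mem_filter, mem_arcEnds, Finset.mem_image, mem_returns, zero_add]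
  constructor
  · rintro ⟨⟨harc, -⟩, hc⟩
    obtain ⟨m, rfl⟩ : ∃ m : ℕ, c = k + 2 + m := ⟨(c - (k + 2)).toNat, by have := harc.le; omega⟩
    exact ⟨m, ⟨(hup m).1 hc, (isDyckArc_pht_iff k w m).1 harc⟩, rfl⟩
  · rintro ⟨m, ⟨hm, hret⟩, rfl⟩
    refine ⟨⟨(isDyckArc_pht_iff k w m).2 hret, ?_⟩, (hup m).2 hm⟩
    have hend := hw.pht_eq_zero
    have hlen := hw.length_eq
    have hmlt := (List.getElem?_eq_some_iff.1 hm).1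
    simp only [List.length_append, List.length_replicate, List.length_cons] at hlen
    have := ((initialAscent_pht hk w).lipschitz (show (k + 2 + m + 1 : ℤ) ≤ 2 * N by omega)).2
    rw [(hup m).2 hm, hend, hf] at this
    rw [hf]
    omega

theorem flipSum_of_neg {M : Type*} [AddCommMonoid M] {h : ℤ} (hh : h < 0) (w : List Bool)
    (F : List Bool → M) : flipSum h w F = 0 := by
  refine Finset.sum_eq_zero fun m hm => absurd ((mem_returns.1 hm).2.2 0 m.zero_le) ?_
  simpa [pht_of_nonpos] using hh

section AddCommMonoid

variable {M : Type*} [AddCommMonoid M]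

theorem flipSum_nil (h : ℤ) (F : List Bool → M) : flipSum h [] F = 0 := rfl

theorem succ_mem_returns_cons {h : ℤ} (hh : 0 ≤ h) (b : Bool) (w : List Bool) (m : ℕ) :
    m + 1 ∈ returns h (b :: w) ↔ m ∈ returns (h + if b then 1 else -1) w := by
  have hcons (l : ℕ) : h + pht (b :: w) (l + 1 : ℕ) = h + (if b then 1 else -1) + pht w l := by
    rw [Nat.cast_add_one, pht_cons b w l.cast_nonneg]
    ring
  rw [mem_returns, mem_returns, List.getElem?_cons_succ, hcons]
  refine and_congr_right fun _ => and_congr_right fun _ => ⟨fun H l hl => ?_, fun H l hl => ?_⟩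
  · rw [← hcons]
    exact H (l + 1) (by omega)
  · rcases l with _ | l
    · simpa [pht_of_nonpos] using hh
    · rw [hcons]
      exact H l (by omega)

theorem flipSum_cons {h : ℤ} (hh : 0 ≤ h) (b : Bool) (w : List Bool) (F : List Bool → M) :
    flipSum h (b :: w) F = (if b = true ∧ h = 0 then F (false :: w) else 0) +
      flipSum (h + if b then 1 else -1) w fun v => F (b :: v) := by
  have hzero : 0 ∈ returns h (b :: w) ↔ b = true ∧ h = 0 := by
    rw [mem_returns]
    simp only [List.getElem?_cons_zero, Option.some.injEq, Nat.cast_zero, pht_of_nonpos _ le_rfl,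
      neg_zero, add_zero, Nat.le_zero, forall_eq]
    exact and_congr_right fun _ => and_iff_left_of_imp Eq.ge
  have hsplit (h : ℤ) (w : List Bool) (F : List Bool → M) : flipSum h w F =
      ∑ m ∈ Finset.range w.length, if m ∈ returns h w then F (w.set m false) else 0 := by
    rw [← Finset.sum_filter, Finset.filter_mem_eq_inter, Finset.inter_eq_right.2]
    · rfl
    · exact Finset.filter_subset _ _
  rw [hsplit, hsplit, List.length_cons, Finset.sum_range_succ', add_comm]
  simp only [succ_mem_returns_cons hh, hzero, List.set_cons_zero, List.set_cons_succ]

theorem flipSum_add (h : ℤ) (w : List Bool) (F G : List Bool → M) :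
    flipSum h w (fun v => F v + G v) = flipSum h w F + flipSum h w G :=
  Finset.sum_add_distrib

theorem flipSum_zero (h : ℤ) (w : List Bool) : flipSum h w (fun _ => (0 : M)) = 0 :=
  Finset.sum_const_zero

theorem flipSum_head {h : ℤ} (hh : 0 ≤ h) (w : List Bool) (G : List Bool → M) :
    flipSum h w (fun v => if v.head? = some false then G v.tail else 0) =
      (if w.head? = some true ∧ h = 0 then G w.tail else 0) +
        if w.head? = some false then flipSum (h - 1) w.tail G else 0 := by
  rcases w with _ | ⟨_ | _, w⟩
  · simp [flipSum_nil]
  · simp [flipSum_cons hh, ← sub_eq_add_neg]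
  · simp [flipSum_cons hh, flipSum_zero]

/-- The sum of `F j v` over the peaks `j` of `w`, where `v` is `w` with that peak removed. -/
def peakSum (w : List Bool) (F : ℕ → List Bool → M) : M := ∑ j ∈ peaks w, F j (removePeak w j)

theorem peakSum_eq_sum_range (w : List Bool) (F : ℕ → List Bool → M) :
    peakSum w F = ∑ j ∈ Finset.range w.length,
      if w[j]? = some true ∧ w[j + 1]? = some false then F (j + 1) (w.take j ++ w.drop (j + 2))
      else 0 := by
  rw [peakSum, peaks, Finset.sum_filter, Finset.range_eq_Ico]
  exact (Finset.sum_Ico_add' (fun j => if w[j - 1]? = some true ∧ w[j]? = some false then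
    F j (removePeak w j) else 0) 0 w.length 1).symm

theorem peakSum_nil (F : ℕ → List Bool → M) : peakSum [] F = 0 := by
  simp [peakSum_eq_sum_range]

theorem peakSum_cons (b : Bool) (w : List Bool) (F : ℕ → List Bool → M) :
    peakSum (b :: w) F = (if b = true ∧ w.head? = some false then F 1 w.tail else 0) +
      peakSum w fun j v => F (j + 1) (b :: v) := by
  rw [peakSum_eq_sum_range, peakSum_eq_sum_range, List.length_cons, Finset.sum_range_succ',
    add_comm]
  simp [List.head?_eq_getElem?]

theorem peakSum_add (w : List Bool) (F G : ℕ → List Bool → M) :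
    peakSum w (fun j v => F j v + G j v) = peakSum w F + peakSum w G :=
  Finset.sum_add_distrib

theorem peakSum_zero (w : List Bool) : peakSum w (fun _ _ => (0 : M)) = 0 :=
  Finset.sum_const_zero

theorem peakSum_flipSum (h : ℤ) (w : List Bool) (F : ℕ → List Bool → M) :
    peakSum w (fun j v => flipSum h v (F j)) = flipSum h w fun v => peakSum v F := by
  induction w generalizing h F with
  | nil => simp only [peakSum_nil, flipSum_nil]
  | cons b w ih =>
    rcases lt_or_ge h 0 with hh | hh
    · simp only [flipSum_of_neg hh, peakSum_zero]
    simp only [peakSum_cons, flipSum_cons hh, peakSum_add, flipSum_add, ih]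
    cases b
    · simp [peakSum_zero, flipSum_zero]
    · have hh' : h + 1 ≠ 0 := by omega
      simp only [true_and, if_true, reduceCtorEq, false_and, if_false, zero_add,
        flipSum_head (show 0 ≤ h + 1 by omega), add_sub_cancel_right, hh', and_false]
      split_ifs <;> simp only [peakSum_zero, zero_add, add_left_comm]

theorem peakSum_replicate_true_append (k : ℕ) (w : List Bool) (F : ℕ → List Bool → M) :
    peakSum (replicate (k + 1) true ++ w) F =
      (if w.head? = some false then F (k + 1) (replicate k true ++ w.tail) else 0) +
        peakSum w fun j v => F (j + k + 1) (replicate (k + 1) true ++ v) := by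
  induction k generalizing F with
  | zero => simp [peakSum_cons]
  | succ k ih =>
    rw [List.replicate_succ, List.cons_append, peakSum_cons, ih]
    simp [List.replicate_succ, add_assoc]

theorem peakSum_replicate_true_append_false_cons {F : ℕ → List Bool → M} (hF : ∀ v, F 0 v = 0)
    (k : ℕ) (w : List Bool) :
    peakSum (replicate k true ++ false :: w) F = F k (replicate (k - 1) true ++ w) +
      peakSum w fun j v => F (j + k + 1) (replicate k true ++ false :: v) := by
  rcases k with _ | k
  · simp [peakSum_cons, hF]
  · simp [peakSum_replicate_true_append, peakSum_cons, add_right_comm _ 1, add_assoc]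

end AddCommMonoid

/-! ### The linear system -/

theorem isBalanced_replicate_true_append {N k : ℕ} {w : List Bool} :
    IsBalanced N (replicate k true ++ w) ↔ k + w.count true = N ∧ w.count false = N := by
  simp [IsBalanced, List.count_replicate]

theorem exists_eq_replicate_true_append (w : List Bool) :
    ∃ k v, w = replicate k true ++ v ∧ v.head? ≠ some true := by
  induction w with
  | nil => exact ⟨0, [], rfl, by simp⟩
  | cons b w ih =>
    cases b
    · exact ⟨0, false :: w, rfl, by simp⟩
    · obtain ⟨k, v, rfl, hv⟩ := ih
      exact ⟨k + 1, v, rfl, hv⟩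

theorem IsBalanced.eq_false_cons_or_eq_replicate {N : ℕ} {w : List Bool} (hw : IsBalanced N w) :
    (∃ v, w = false :: v) ∨ (∃ k v, k + 1 < N ∧ w = replicate (k + 1) true ++ false :: v) ∨
      w = replicate N true ++ replicate N false := by
  obtain ⟨k, v, rfl, hv⟩ := exists_eq_replicate_true_append w
  obtain ⟨htrue, hfalse⟩ := isBalanced_replicate_true_append.1 hw
  rcases Nat.eq_zero_or_pos (v.count true) with hv₀ | hpos
  · have hv' : v = replicate N false := List.eq_replicate_iff.2
      ⟨by rw [← v.count_true_add_count_false, hv₀, hfalse, zero_add],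
        fun b hb => eq_false_of_ne_true fun h => List.count_eq_zero.1 hv₀ (h ▸ hb)⟩
    rw [hv₀, add_zero] at htrue
    rw [htrue, hv']
    exact .inr (.inr rfl)
  · rcases v with _ | ⟨_ | _, v⟩
    · simp at hpos
    · rcases k with _ | k
      · exact .inl ⟨v, rfl⟩
      · exact .inr (.inl ⟨k, v, by omega, rfl⟩)
    · simp at hv

theorem IsBalanced.set_false {N k : ℕ} {w : List Bool} {m : ℕ} (hm : w[m]? = some true)
    (hw : IsBalanced N (replicate (k + 1) true ++ false :: w)) :
    IsBalanced N (replicate (k + 2) true ++ w.set m false) := by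
  obtain ⟨hlt, hget⟩ := List.getElem?_eq_some_iff.1 hm
  have hpos : 0 < w.count true := List.count_pos_iff.2 (hget ▸ List.getElem_mem hlt)
  rw [isBalanced_replicate_true_append] at hw ⊢
  simp only [List.count_cons_self, List.count_cons_of_ne Bool.false_ne_true, List.count_set hlt,
    hget, BEq.rfl, beq_true, beq_false, Bool.not_true, Bool.false_eq_true, if_true, if_false]
    at hw ⊢
  omega

theorem count_removePeak {w : List Bool} {j : ℕ} (hj : j ∈ peaks w) (b : Bool) :
    (removePeak w j).count b + 1 = w.count b := by
  simp only [peaks, Finset.mem_filter, Finset.mem_Icc] at hj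
  obtain ⟨⟨hj₁, -⟩, hup, hdown⟩ := hj
  obtain ⟨i, rfl⟩ := Nat.exists_eq_add_of_le' hj₁
  obtain ⟨hi, hup⟩ := List.getElem?_eq_some_iff.1 hup
  obtain ⟨hi', hdown⟩ := List.getElem?_eq_some_iff.1 hdown
  have hw : w = w.take i ++ true :: false :: w.drop (i + 2) := by
    rw [← hup, ← hdown]
    simp
  conv_rhs => rw [hw]
  cases b <;> simp [removePeak, add_assoc]

theorem IsBalanced.append_removePeak {n : ℕ} {u w : List Bool} {j : ℕ} (hj : j ∈ peaks w)
    (hw : IsBalanced (n + 1) (u ++ w)) : IsBalanced n (u ++ removePeak w j) := by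
  obtain ⟨htrue, hfalse⟩ := hw
  rw [List.count_append, ← count_removePeak hj] at htrue hfalse
  constructor <;> rw [List.count_append] <;> omega

/-- The linear relations, with parameter `t`, satisfied by the generating function of
cover-inclusive Dyck tilings as a function of the balanced word of size `N`. -/
structure IsSolution {K : Type*} [CommRing K] (t : K) (N : ℕ) (X : List Bool → K) : Prop where
  rel : ∀ k w, k + 1 < N → IsBalanced N (replicate (k + 1) true ++ false :: w) →
    t * X (replicate (k + 1) true ++ false :: w) =
      X (replicate k true ++ false :: true :: w) +
        flipSum 0 w fun v => X (replicate (k + 2) true ++ v)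
  zero : ∀ w, IsBalanced N (false :: w) → X (false :: w) = 0

namespace IsSolution

variable {K : Type*} [CommRing K] {t : K} {N : ℕ} {X Y : List Bool → K}

theorem const_mul (hX : IsSolution t N X) (c : K) : IsSolution t N fun w => c * X w where
  rel k w hk hw := by
    rw [mul_left_comm, hX.rel k w hk hw, mul_add, flipSum, Finset.mul_sum]
    rfl
  zero w hw := by rw [hX.zero w hw, mul_zero]

theorem sub (hX : IsSolution t N X) (hY : IsSolution t N Y) :
    IsSolution t N fun w => X w - Y w where
  rel k w hk hw := by
    rw [mul_sub, hX.rel k w hk hw, hY.rel k w hk hw, add_sub_add_comm, flipSum, flipSum,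
      ← Finset.sum_sub_distrib]
    rfl
  zero w hw := by rw [hX.zero w hw, hY.zero w hw, sub_zero]

end IsSolution

theorem IsSolution.eq_zero {K Γ₀ : Type*} [Field K] [LinearOrderedCommGroupWithZero Γ₀]
    {t : K} (v : Valuation K Γ₀) (ht : 1 < v t) {N : ℕ} {X : List Bool → K}
    (hX : IsSolution t N X) (htop : X (replicate N true ++ replicate N false) = 0)
    {w : List Bool} (hw : IsBalanced N w) : X w = 0 := by
  have hfin : {w | IsBalanced N w}.Finite :=
    (List.finite_length_eq Bool (2 * N)).subset fun w hw => hw.length_eq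
  obtain ⟨u, hu, hmax⟩ := Set.exists_max_image _ (fun w => v (X w)) hfin ⟨w, hw⟩
  suffices hzero : X u = 0 by
    have := hmax w hw
    rwa [hzero, map_zero, le_zero_iff, map_eq_zero] at this
  rcases IsBalanced.eq_false_cons_or_eq_replicate hu with ⟨u, rfl⟩ | ⟨k, u, hk, rfl⟩ | rfl
  · exact hX.zero u hu
  · by_contra hne
    have hle : v (t * X (replicate (k + 1) true ++ false :: u)) ≤
        v (X (replicate (k + 1) true ++ false :: u)) := by
      rw [hX.rel k u hk hu]
      refine v.map_add_le (hmax _ ?_) (v.map_sum_le fun m hm => hmax _ ?_)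
      · rw [Set.mem_ofPred_eq, isBalanced_replicate_true_append] at hu ⊢
        simp only [List.count_cons_self, List.count_cons_of_ne Bool.false_ne_true,
          List.count_cons_of_ne Bool.false_ne_true.symm] at hu ⊢
        omega
      · exact IsBalanced.set_false (mem_returns.1 hm).1 hu
    rw [map_mul] at hle
    exact hle.not_gt (lt_mul_of_one_lt_left (zero_lt_iff.2 (v.ne_zero_iff.2 hne)) ht)
  · exact htop

/-- The sum of `a j * X v` over the peaks `j ≤ n + 1` of `w`, where `v` is `w` with that peak
removed. -/
def removalSum {K : Type*} [CommRing K] (a : ℕ → K) (n : ℕ) (X : List Bool → K) (w : List Bool) :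
    K :=
  peakSum w fun j v => if j ≤ n + 1 then a j * X v else 0

theorem peakSum_replicate_false {M : Type*} [AddCommMonoid M] (n : ℕ) (F : ℕ → List Bool → M) :
    peakSum (replicate n false) F = 0 := by
  induction n generalizing F with
  | zero => exact peakSum_nil F
  | succ n ih => simp [List.replicate_succ, peakSum_cons, ih]

theorem removalSum_top {K : Type*} [CommRing K] (a : ℕ → K) (n : ℕ) (X : List Bool → K) :
    removalSum a n X (replicate (n + 1) true ++ replicate (n + 1) false) =
      a (n + 1) * X (replicate n true ++ replicate n false) := by
  rw [removalSum, peakSum_replicate_true_append, peakSum_replicate_false]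
  simp [List.replicate_succ]

theorem one_le_of_mem_peaks {w : List Bool} {j : ℕ} (hj : j ∈ peaks w) : 1 ≤ j :=
  (Finset.mem_Icc.1 (Finset.mem_filter.1 hj).1).1

theorem peakSum_add_flipSum_peakSum {M : Type*} [AddCommMonoid M] {F : ℕ → List Bool → M}
    (hF : ∀ v, F 0 v = 0) (k : ℕ) {w : List Bool} (hw : w ≠ []) :
    peakSum (replicate k true ++ false :: true :: w) F +
        flipSum 0 w (fun v => peakSum (replicate (k + 2) true ++ v) F) =
      F k (replicate k true ++ w) + F (k + 2) (replicate k true ++ w) +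
        peakSum w fun j v => F (j + (k + 1) + 1) (replicate k true ++ false :: true :: v) +
          flipSum 0 v fun u => F (j + (k + 1) + 1) (replicate (k + 2) true ++ u) := by
  have hpeak : F k (replicate (k - 1) true ++ true :: w) = F k (replicate k true ++ w) := by
    rcases k with _ | k
    · rw [hF, hF]
    · simp [List.replicate_succ']
  have hflip : flipSum 0 w (fun v => peakSum (replicate (k + 2) true ++ v) F) =
      (if w.head? = some true then F (k + 2) (replicate (k + 1) true ++ w.tail) else 0) +
        peakSum w fun j v =>
          flipSum 0 v fun u => F (j + (k + 1) + 1) (replicate (k + 2) true ++ u) := by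
    have hhead := flipSum_head le_rfl w fun u => F (k + 2) (replicate (k + 1) true ++ u)
    simp only [flipSum_of_neg (show (0 : ℤ) - 1 < 0 by norm_num), ite_self, add_zero,
      and_true] at hhead
    simp only [peakSum_replicate_true_append, flipSum_add, peakSum_flipSum]
    rw [← hhead]
  rw [hflip, peakSum_replicate_true_append_false_cons hF, peakSum_cons, hpeak, peakSum_add]
  have hjoin : (if true = true ∧ w.head? = some false then
        F (1 + k + 1) (replicate k true ++ false :: w.tail) else 0) +
      (if w.head? = some true then F (k + 2) (replicate (k + 1) true ++ w.tail) else 0) =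
      F (k + 2) (replicate k true ++ w) := by
    rcases w with _ | ⟨_ | _, w⟩
    · exact absurd rfl hw
    · simp [add_comm, add_left_comm]
    · simp [List.replicate_succ']
  rw [← hjoin]
  simp only [add_right_comm _ 1, ← add_assoc]
  abel

theorem IsBalanced.ne_nil_of_lt {N k : ℕ} {w : List Bool}
    (hw : IsBalanced N (replicate k true ++ false :: w)) (hk : k < N) : w ≠ [] := by
  rintro rfl
  have := isBalanced_replicate_true_append.1 hw
  rw [List.count_singleton_self, List.count_singleton, if_neg (by decide)] at this
  omega

theorem isSolution_removalSum {K : Type*} [CommRing K] {t : K} {n : ℕ} {X : List Bool → K}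
    (hX : IsSolution t n X) {a : ℕ → K} (ha₀ : a 0 = 0)
    (ha : ∀ j, t * a (j + 1) = a (j + 2) + a j) :
    IsSolution t (n + 1) (removalSum a n X) where
  rel k w hk hw := by
    set F : ℕ → List Bool → K := fun j v => if j ≤ n + 1 then a j * X v else 0 with hF
    have hinner : ∀ j ∈ peaks w,
        t * F (j + (k + 1) + 1) (replicate (k + 1) true ++ false :: removePeak w j) =
          F (j + (k + 1) + 1) (replicate k true ++ false :: true :: removePeak w j) +
            flipSum 0 (removePeak w j) fun u =>
              F (j + (k + 1) + 1) (replicate (k + 2) true ++ u) := by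
      intro j hj
      have hj₁ := one_le_of_mem_peaks hj
      have hv : IsBalanced n (replicate (k + 1) true ++ false :: removePeak w j) := by
        have := IsBalanced.append_removePeak hj (u := replicate (k + 1) true ++ [false])
          (by simpa using hw)
        simpa using this
      by_cases hjn : j + (k + 1) + 1 ≤ n + 1
      · simp only [hF, if_pos hjn]
        exact (hX.const_mul _).rel k _ (by omega) hv
      · simp only [hF, if_neg hjn, flipSum_zero, mul_zero, add_zero]
    have hF₀ (v : List Bool) : F 0 v = 0 := by simp [hF, ha₀]
    have houter (v : List Bool) : t * F (k + 1) v = F k v + F (k + 2) v := by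
      simp only [hF, if_pos (show k + 2 ≤ n + 1 by omega), if_pos (show k + 1 ≤ n + 1 by omega),
        if_pos (show k ≤ n + 1 by omega), ← mul_assoc, ha, add_mul, add_comm]
    change t * peakSum _ F = peakSum _ F + flipSum 0 w fun v => peakSum _ F
    rw [peakSum_add_flipSum_peakSum hF₀ k (hw.ne_nil_of_lt hk),
      peakSum_replicate_true_append_false_cons hF₀, mul_add, houter, peakSum, peakSum,
      Finset.mul_sum, Finset.sum_congr rfl hinner]
    rfl
  zero w hw := by
    rw [removalSum, peakSum_cons, if_neg (by simp), zero_add]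
    refine Finset.sum_eq_zero fun j hj => ?_
    have hv : IsBalanced n (false :: removePeak w j) :=
      IsBalanced.append_removePeak (u := [false]) hj hw
    simp only [hX.zero _ hv, mul_zero, ite_self]

theorem ZA_top (N : ℕ) : ZA N (replicate N true ++ replicate N false) = 1 := by
  have hempty (p : ℤ × ℤ) :
      p ∉ boxesAbove N (pht (replicate N true ++ replicate N false)) := fun hp => by
    obtain ⟨hp₁, -, -, hlt, hp, hp'⟩ := mem_boxesAbove.1 hp
    rw [pht_replicate_true_append, pht_replicate_false] at hlt
    split_ifs at hlt with h
    · rw [abs_of_pos (by omega)] at hlt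
      omega
    · omega
  have htilings : tilings N (pht (replicate N true ++ replicate N false)) = {∅} := by
    ext T
    rw [mem_tilings, Finset.mem_singleton]
    constructor
    · rintro ⟨hT, -⟩
      refine Finset.eq_empty_of_forall_notMem fun d hd => ?_
      obtain ⟨p, hp⟩ := (hT.tile d hd).nonempty
      exact hempty p (hT.subset d hd p hp)
    · rintro rfl
      exact ⟨⟨by simp, by simp, fun p hp => absurd hp (hempty p)⟩, by simp⟩
  rw [ZA_eq_weightSum, htilings, weightSum, Finset.sum_singleton, Finset.prod_empty]

theorem isSolution_ZA (N : ℕ) : IsSolution (qInt 2) N (ZA N) where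
  rel k w hk hw := by
    have h := qInt_two_mul_weightSum_tilings (initialAscent_pht hk w)
      (by exact_mod_cast Nat.le_add_left 1 k)
    rw [Nat.cast_add_one, lowerPeak_pht, add_assoc, one_add_one_eq_two,
      filter_arcEnds_eq_image_returns hk hw, Finset.sum_image (by simp)] at h
    simp only [ZA_eq_weightSum, flipSum]
    rw [h]
    congr 1
    exact Finset.sum_congr rfl fun m hm => by rw [raise_pht k (mem_returns.1 hm).1]
  zero w hw := by
    have hN : 0 < N := by
      rw [← hw.2]
      simp
    rw [ZA_eq_weightSum]
    exact (initialAscent_pht hN w).weightSum_tilings_eq_zero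

theorem ZA_recurrence_general (n : ℕ) {w : List Bool} (hw : IsBalanced (n + 1) w) :
    ZA (n + 1) w =
      ∑ i ∈ (peaks w).filter (fun j => j ≤ n + 1),
        (qInt i / qInt (n + 1)) * ZA n (removePeak w i) := by
  have hne : qInt (n + 1) ≠ 0 := qInt_ne_zero (by omega)
  have hsol : IsSolution (qInt 2) (n + 1) (removalSum (fun j => qInt j) n (ZA n)) :=
    isSolution_removalSum (isSolution_ZA n) qInt_zero fun j => by
      simpa [add_assoc, add_sub_assoc] using qInt_two_mul (j + 1)
  have hdiff := ((isSolution_ZA (n + 1)).const_mul (qInt (n + 1))).sub hsol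
  have htop : qInt (n + 1) * ZA (n + 1) (replicate (n + 1) true ++ replicate (n + 1) false) -
      removalSum (fun j => qInt j) n (ZA n)
        (replicate (n + 1) true ++ replicate (n + 1) false) = 0 := by
    rw [removalSum_top, ZA_top, ZA_top, Nat.cast_add_one, sub_self]
  have hZ := sub_eq_zero.1 (hdiff.eq_zero _ one_lt_inftyValuation_qInt_two htop hw)
  apply mul_left_cancel₀ hne
  rw [hZ, removalSum, peakSum, ← Finset.sum_filter, Finset.mul_sum]
  exact Finset.sum_congr rfl fun i _ => by rw [← mul_assoc, mul_div_cancel₀ _ hne]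

/-- Let `μ` be a Dyck path of size `n+1`, `{i}` the set of positions
`≤ n+1` of its peaks (consecutive `UR` pairs, i.e. innermost caps of the associated
diagram, with position `n+1` corresponding to the rightmost vertical strand), and `μ_i`
the Dyck path of size `n` obtained by deleting the corresponding `UR` pair.  Then
`Z(μ) = Σ_i ([i]/[n+1]) Z(μ_i)`. -/
theorem ZA_recurrence (n : ℕ) (μ : DyckPath (n + 1)) :
    ZA (n + 1) μ.1 =
      ∑ i ∈ (peaks μ.1).filter (fun j => j ≤ n + 1),
        (qInt i / qInt (n + 1)) * ZA n (removePeak μ.1 i) := by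
  obtain ⟨hlength, hcount, -⟩ := μ.2
  have := μ.1.count_true_add_count_false
  exact ZA_recurrence_general n ⟨by omega, by omega⟩
end
end

section
/- The elements Q^{(n)} ∈ TL^B_n defined recursively by Q^{(0)} = 1 and Q^{(n+1)} = Q^{(n)} + ([n]_s/[n+1]_s)·Q^{(n)} e_n Q^{(n)} are idempotent: Q^{(n)}·Q^{(n)} = Q^{(n)} for all n ≥ 0. -/
noncomputable section
open scoped Classical

/-! ### The field `ℂ(q,s)` and two-variable quantum integers -/

/-- The field `ℂ(q,s)` of rational functions in two variables. -/
abbrev 𝕃 : Type := FractionRing (MvPolynomial (Fin 2) ℂ)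

/-- The variable `q`. -/
def qB : 𝕃 := algebraMap (MvPolynomial (Fin 2) ℂ) 𝕃 (MvPolynomial.X 0)

/-- The variable `s`. -/
def sB : 𝕃 := algebraMap (MvPolynomial (Fin 2) ℂ) 𝕃 (MvPolynomial.X 1)

/-- The two-variable quantum integer `[n]_s`: `[0]_s = 1` and
`[n]_s = q^(n-1) s + q^(-(n-1)) s⁻¹` for `n ≥ 1`. -/
def bqInt (n : ℤ) : 𝕃 := if n = 0 then 1 else qB ^ (n - 1) * sB + qB ^ (1 - n) * sB⁻¹

/-! ### The Temperley–Lieb algebra of type B and its Jones–Wenzl projections -/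

/-- Defining relations of the Temperley–Lieb algebra `TL^B_n` of type B.
The generator indexed by `i : Fin n` represents `e_i` (labels `0, …, n-1`):
the type A relations among `e_1, …, e_{n-1}`, together with `e_0² = -[1]_s e_0`,
`e_1 e_0 e_1 = (q s⁻¹ + q⁻¹ s) e_1`, and `e_0 e_i = e_i e_0` for `i ≥ 2`. -/
inductive TLBrel (n : ℕ) : FreeAlgebra 𝕃 (Fin n) → FreeAlgebra 𝕃 (Fin n) → Prop
  | sqA (i : Fin n) (h : 1 ≤ (i : ℕ)) :
      TLBrel n (FreeAlgebra.ι 𝕃 i * FreeAlgebra.ι 𝕃 i) ((-(qB + qB⁻¹)) • FreeAlgebra.ι 𝕃 i)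
  | sq0 (i : Fin n) (h : (i : ℕ) = 0) :
      TLBrel n (FreeAlgebra.ι 𝕃 i * FreeAlgebra.ι 𝕃 i) ((-(bqInt 1)) • FreeAlgebra.ι 𝕃 i)
  | braidA (i j : Fin n) (hi : 1 ≤ (i : ℕ)) (hj : 1 ≤ (j : ℕ))
      (h : (j : ℕ) = i + 1 ∨ (i : ℕ) = j + 1) :
      TLBrel n (FreeAlgebra.ι 𝕃 i * FreeAlgebra.ι 𝕃 j * FreeAlgebra.ι 𝕃 i) (FreeAlgebra.ι 𝕃 i)
  | braid0 (i j : Fin n) (hi : (i : ℕ) = 1) (hj : (j : ℕ) = 0) :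
      TLBrel n (FreeAlgebra.ι 𝕃 i * FreeAlgebra.ι 𝕃 j * FreeAlgebra.ι 𝕃 i)
        ((qB * sB⁻¹ + qB⁻¹ * sB) • FreeAlgebra.ι 𝕃 i)
  | comm (i j : Fin n) (h : (i : ℕ) + 1 < j ∨ (j : ℕ) + 1 < i) :
      TLBrel n (FreeAlgebra.ι 𝕃 i * FreeAlgebra.ι 𝕃 j) (FreeAlgebra.ι 𝕃 j * FreeAlgebra.ι 𝕃 i)

/-- The Temperley–Lieb algebra `TL^B_n` of type B, with generators `e_0, …, e_{n-1}`. -/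
abbrev TLB (n : ℕ) : Type := RingQuot (TLBrel n)

/-- The generator `e_i` of `TL^B_n` (0-based labels). -/
def EB {n : ℕ} (i : Fin n) : TLB n := RingQuot.mkAlgHom 𝕃 (TLBrel n) (FreeAlgebra.ι 𝕃 i)

set_option synthInstance.maxHeartbeats 1000000 in
/-- The natural inclusion `TL^B_n → TL^B_{n+1}`, sending `e_i` to `e_i`. -/
def TLBincl (n : ℕ) : TLB n →ₐ[𝕃] TLB (n + 1) :=
  RingQuot.liftAlgHom 𝕃
    ⟨FreeAlgebra.lift 𝕃 (fun i => EB i.castSucc), by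
      intro x y h
      induction h with
      | sqA i h =>
          have h2 := RingQuot.mkAlgHom_rel 𝕃 (TLBrel.sqA i.castSucc (by simpa using h))
          simp only [map_mul, map_smul, FreeAlgebra.lift_ι_apply, EB] at h2 ⊢
          exact h2
      | sq0 i h =>
          have h2 := RingQuot.mkAlgHom_rel 𝕃 (TLBrel.sq0 i.castSucc (by simpa using h))
          simp only [map_mul, map_smul, FreeAlgebra.lift_ι_apply, EB] at h2 ⊢
          exact h2
      | braidA i j hi hj h =>
          have h2 := RingQuot.mkAlgHom_rel 𝕃
            (TLBrel.braidA i.castSucc j.castSucc (by simpa using hi) (by simpa using hj)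
              (by simpa using h))
          simp only [map_mul, FreeAlgebra.lift_ι_apply, EB] at h2 ⊢
          exact h2
      | braid0 i j hi hj =>
          have h2 := RingQuot.mkAlgHom_rel 𝕃
            (TLBrel.braid0 i.castSucc j.castSucc (by simpa using hi) (by simpa using hj))
          simp only [map_mul, map_smul, FreeAlgebra.lift_ι_apply, EB] at h2 ⊢
          exact h2
      | comm i j h =>
          have h2 := RingQuot.mkAlgHom_rel 𝕃
            (TLBrel.comm i.castSucc j.castSucc (by simpa using h))
          simp only [map_mul, FreeAlgebra.lift_ι_apply, EB] at h2 ⊢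
          exact h2⟩

/-- The iterated natural inclusion `TL^B_n → TL^B_{n+k}`. -/
def TLBinclIter (n : ℕ) : (k : ℕ) → TLB n →ₐ[𝕃] TLB (n + k)
  | 0 => AlgHom.id 𝕃 (TLB n)
  | k + 1 => (TLBincl (n + k)).comp (TLBinclIter n k)

/-- The type B Jones–Wenzl projection `Q^{(n)} ∈ TL^B_n`, via the recurrence
`Q^{(0)} = 1`, `Q^{(n+1)} = Q^{(n)} + ([n]_s/[n+1]_s) Q^{(n)} e_n Q^{(n)}`. -/
def JWB : (n : ℕ) → TLB n
  | 0 => 1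
  | n + 1 =>
      TLBincl n (JWB n) +
        (bqInt n / bqInt (n + 1)) •
          (TLBincl n (JWB n) * EB (Fin.last n) * TLBincl n (JWB n))

/-!
Write `Q = Q^{(n+1)}` and `e = e_{n+1}`. Since `e` commutes with `Q^{(n)}`, compressing the
recurrence for `Q` by `e` gives `e Q e = -([n+2]_s/[n+1]_s) Q^{(n)} e`. As `Q Q^{(n)} = Q`, the
element `-([n+1]_s/[n+2]_s) Q e Q` is then an idempotent below the idempotent `Q`, so the
difference `Q^{(n+2)}` of the two is idempotent.

The convention `[0]_s = 1` does not break the uniformity in `n`: the coefficient of the relation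
`e_1 e_0 e_1 = (q s⁻¹ + q⁻¹ s) e_1` is the value at `n = 0` of the formula for `[n]_s`, `n ≥ 1`.
-/

section WenzlStep

variable {R A : Type*} [CommSemiring R] [Semiring A] [Algebra R A] {p e f : A} {a b c d t : R}

/-- One step `p ↦ p + c • p e p` of the Jones–Wenzl recurrence, in an arbitrary algebra. -/
def wenzlStep (c : R) (p e : A) : A := p + c • (p * e * p)

theorem map_wenzlStep {B : Type*} [Semiring B] [Algebra R B] (φ : A →ₐ[R] B) (c : R) (p e : A) :
    φ (wenzlStep c p e) = wenzlStep c (φ p) (φ e) := by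
  simp only [wenzlStep, map_add, map_smul, map_mul]

theorem wenzlStep_mul_self (hp : IsIdempotentElem p) :
    wenzlStep c p e * p = wenzlStep c p e := by
  rw [wenzlStep, add_mul, hp.eq, smul_mul_assoc, mul_assoc (p * e), hp.eq]

theorem mul_wenzlStep_mul (hp : IsIdempotentElem p) (hpe : Commute p e)
    (hee : e * e = a • e) (hefe : e * f * e = b • e) :
    e * wenzlStep c p f * e = (a + c * b) • (p * e) := by
  have hepe : e * p * e = a • (p * e) := by
    rw [← hpe.eq, mul_assoc, hee, mul_smul_comm]
  have hepfpe : e * (p * f * p) * e = b • (p * e) := calc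
    e * (p * f * p) * e = e * p * f * (p * e) := by simp only [mul_assoc]
    _ = p * e * f * (e * p) := by rw [hpe.eq]
    _ = p * (e * f * e) * p := by simp only [mul_assoc]
    _ = b • (p * e) := by
      rw [hefe, mul_smul_comm, smul_mul_assoc, mul_assoc, ← hpe.eq, hp.mul_self_mul]
  rw [wenzlStep, mul_add, add_mul, mul_smul_comm, smul_mul_assoc, hepe, hepfpe, smul_smul,
    add_smul]

theorem isIdempotentElem_wenzlStep (hp : IsIdempotentElem p)
    (hpep : p * e * p * (p * e * p) = t • (p * e * p)) (hct : 1 + c * t = 0) :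
    IsIdempotentElem (wenzlStep c p e) := by
  have h_left : p * (p * e * p) = p * e * p := by rw [mul_assoc p e, hp.mul_self_mul]
  have h_right : p * e * p * p = p * e * p := by rw [mul_assoc (p * e), hp.eq]
  have h_coeff : c + c + c * c * t = c := calc
    c + c + c * c * t = c + c * (1 + c * t) := by ring
    _ = c := by rw [hct, mul_zero, add_zero]
  calc wenzlStep c p e * wenzlStep c p e
      = p + (c + c + c * c * t) • (p * e * p) := by
        simp only [wenzlStep, mul_add, add_mul, smul_mul_assoc, mul_smul_comm, h_left, h_right,
          hpep, hp.eq, smul_smul, smul_add, add_smul, mul_assoc c, add_assoc]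
    _ = wenzlStep c p e := by rw [h_coeff, wenzlStep]

theorem isIdempotentElem_wenzlStep_wenzlStep (hp : IsIdempotentElem p)
    (hq : IsIdempotentElem (wenzlStep c p f)) (hpe : Commute p e)
    (hee : e * e = a • e) (hefe : e * f * e = b • e) (hd : 1 + d * (a + c * b) = 0) :
    IsIdempotentElem (wenzlStep d (wenzlStep c p f) e) := by
  refine isIdempotentElem_wenzlStep hq ?_ hd
  have heqe := mul_wenzlStep_mul (c := c) hp hpe hee hefe
  have hqp := wenzlStep_mul_self (c := c) (e := f) hp
  generalize wenzlStep c p f = q at *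
  calc q * e * q * (q * e * q) = q * (e * (q * q) * e) * q := by simp only [mul_assoc]
    _ = (a + c * b) • (q * p * e * q) := by
      rw [hq.eq, heqe, mul_smul_comm, smul_mul_assoc, mul_assoc q p]
    _ = (a + c * b) • (q * e * q) := by rw [hqp]

end WenzlStep

section QuantumIntegers

theorem qB_ne_zero : qB ≠ 0 :=
  IsFractionRing.to_map_eq_zero_iff.not.mpr (MvPolynomial.X_ne_zero 0)

theorem sB_ne_zero : sB ≠ 0 :=
  IsFractionRing.to_map_eq_zero_iff.not.mpr (MvPolynomial.X_ne_zero 1)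

theorem bqInt_zero : bqInt 0 = 1 := if_pos rfl

theorem bqInt_of_ne_zero {n : ℤ} (hn : n ≠ 0) :
    bqInt n = qB ^ (n - 1) * sB + qB ^ (1 - n) * sB⁻¹ := if_neg hn

theorem qB_pow_mul_sB_sq_ne_neg_one (n : ℕ) : (qB ^ n * sB) ^ 2 ≠ -1 := by
  intro h
  have h_poly : (MvPolynomial.X 0 ^ n * MvPolynomial.X 1 : MvPolynomial (Fin 2) ℂ) ^ 2 = -1 := by
    apply IsFractionRing.injective (MvPolynomial (Fin 2) ℂ) 𝕃
    simpa only [map_pow, map_mul, map_neg, map_one, qB, sB] using h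
  have h_const := congrArg MvPolynomial.constantCoeff h_poly
  simp at h_const

theorem bqInt_natCast_succ_ne_zero (n : ℕ) : bqInt (n + 1) ≠ 0 := by
  intro h
  have hq : qB ^ n ≠ 0 := pow_ne_zero n qB_ne_zero
  have hs := sB_ne_zero
  rw [bqInt_of_ne_zero (by lia), add_sub_cancel_right, sub_add_cancel_right, zpow_neg,
    zpow_natCast] at h
  field_simp at h
  exact qB_pow_mul_sB_sq_ne_neg_one n (by linear_combination h)

/-- The scalar `b_n` of the relation `e_{n+1} e_n e_{n+1} = b_n e_{n+1}`. -/
def braidCoeff (n : ℕ) : 𝕃 := if n = 0 then qB * sB⁻¹ + qB⁻¹ * sB else 1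

theorem bqInt_mul_braidCoeff (n : ℕ) :
    bqInt n * braidCoeff n = qB ^ (n - 1 : ℤ) * sB + qB ^ (1 - n : ℤ) * sB⁻¹ := by
  rcases eq_or_ne n 0 with rfl | hn
  · rw [Nat.cast_zero, bqInt_zero, braidCoeff, if_pos rfl, zero_sub, sub_zero, zpow_neg_one,
      zpow_one]
    ring
  · rw [bqInt_of_ne_zero (mod_cast hn), braidCoeff, if_neg hn, mul_one]

theorem bqInt_natCast_add_two (n : ℕ) :
    bqInt (n + 2) = (qB + qB⁻¹) * bqInt (n + 1) - bqInt n * braidCoeff n := by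
  have hq := qB_ne_zero
  have hs := sB_ne_zero
  rw [bqInt_mul_braidCoeff, bqInt_of_ne_zero (by lia), bqInt_of_ne_zero (by lia)]
  simp only [zpow_add₀ hq, zpow_sub₀ hq, zpow_natCast, zpow_ofNat]
  field_simp
  ring

theorem one_add_bqInt_div_mul_eq_zero (n : ℕ) :
    1 + bqInt (n + 1) / bqInt (n + 2) *
      (-(qB + qB⁻¹) + bqInt n / bqInt (n + 1) * braidCoeff n) = 0 := by
  have h₁ : bqInt (n + 1) ≠ 0 := bqInt_natCast_succ_ne_zero n
  have h₂ : bqInt (n + 2) ≠ 0 := by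
    simpa [add_assoc, one_add_one_eq_two] using bqInt_natCast_succ_ne_zero (n + 1)
  have hq := qB_ne_zero
  field_simp
  rw [bqInt_natCast_add_two]
  field_simp
  ring

end QuantumIntegers

section Generators

variable {n : ℕ}

theorem EB_mul_self {i : Fin n} (hi : 1 ≤ (i : ℕ)) : EB i * EB i = (-(qB + qB⁻¹)) • EB i := by
  simpa only [map_mul, map_smul, EB] using RingQuot.mkAlgHom_rel 𝕃 (TLBrel.sqA i hi)

theorem EB_zero_mul_self : EB (0 : Fin (n + 1)) * EB 0 = (-bqInt 1) • EB (0 : Fin (n + 1)) := by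
  simpa only [map_mul, map_smul, EB] using
    RingQuot.mkAlgHom_rel 𝕃 (TLBrel.sq0 (0 : Fin (n + 1)) rfl)

theorem commute_EB {i j : Fin n} (hij : (i : ℕ) + 1 < j) : Commute (EB i) (EB j) := by
  rw [commute_iff_eq]
  simpa only [map_mul, EB] using RingQuot.mkAlgHom_rel 𝕃 (TLBrel.comm i j (.inl hij))

theorem EB_succ_mul_EB_castSucc_mul_EB_succ (i : Fin n) :
    EB i.succ * EB i.castSucc * EB i.succ = braidCoeff i • EB i.succ := by
  rcases Nat.eq_zero_or_pos (i : ℕ) with hi | hi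
  · have h_rel := RingQuot.mkAlgHom_rel 𝕃
      (TLBrel.braid0 i.succ i.castSucc (by simp [hi]) (by simp [hi]))
    simpa only [map_mul, map_smul, braidCoeff, if_pos hi, EB] using h_rel
  · have h_rel := RingQuot.mkAlgHom_rel 𝕃
      (TLBrel.braidA i.succ i.castSucc (by simp) hi (by simp))
    simpa only [map_mul, braidCoeff, if_neg hi.ne', one_smul, EB] using h_rel

theorem TLBincl_EB (i : Fin n) : TLBincl n (EB i) = EB i.castSucc := by
  rw [TLBincl, EB, RingQuot.liftAlgHom_mkAlgHom_apply, FreeAlgebra.lift_ι_apply]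

theorem TLB_induction {motive : TLB n → Prop}
    (algebraMap : ∀ r, motive (algebraMap 𝕃 (TLB n) r)) (EB : ∀ i, motive (EB i))
    (mul : ∀ x y, motive x → motive y → motive (x * y))
    (add : ∀ x y, motive x → motive y → motive (x + y)) (x : TLB n) : motive x := by
  obtain ⟨x, rfl⟩ := RingQuot.mkAlgHom_surjective 𝕃 (TLBrel n) x
  induction x using FreeAlgebra.induction with
  | grade0 r => simpa only [AlgHom.commutes] using algebraMap r
  | grade1 i => exact EB i
  | mul x y hx hy => simpa only [map_mul] using mul _ _ hx hy
  | add x y hx hy => simpa only [map_add] using add _ _ hx hy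

theorem commute_TLBincl_TLBincl_EB_last (x : TLB n) :
    Commute (TLBincl (n + 1) (TLBincl n x)) (EB (Fin.last (n + 1))) := by
  induction x using TLB_induction with
  | algebraMap r =>
    rw [AlgHom.commutes, AlgHom.commutes]
    exact Algebra.commute_algebraMap_left r _
  | EB i =>
    rw [TLBincl_EB, TLBincl_EB]
    exact commute_EB (by simp)
  | mul x y hx hy => simpa only [map_mul] using hx.mul_left hy
  | add x y hx hy => simpa only [map_add] using hx.add_left hy

end Generators

section JonesWenzl

theorem JWB_succ (n : ℕ) :
    JWB (n + 1) =
      wenzlStep (bqInt n / bqInt (n + 1)) (TLBincl n (JWB n)) (EB (Fin.last n)) := rfl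

theorem isIdempotentElem_JWB_one : IsIdempotentElem (JWB 1) := by
  have h_JWB : JWB 1 = wenzlStep (bqInt 0 / bqInt 1) 1 (EB 0) := by
    simp [JWB, wenzlStep, Fin.last]
  have h_ne : bqInt 1 ≠ 0 := by simpa using bqInt_natCast_succ_ne_zero 0
  rw [h_JWB]
  refine isIdempotentElem_wenzlStep .one (t := -bqInt 1) ?_ ?_
  · simpa only [one_mul, mul_one] using EB_zero_mul_self
  · rw [bqInt_zero, mul_neg, one_div_mul_cancel h_ne, add_neg_cancel]

theorem isIdempotentElem_JWB_add_two {n : ℕ} (h₀ : IsIdempotentElem (JWB n))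
    (h₁ : IsIdempotentElem (JWB (n + 1))) : IsIdempotentElem (JWB (n + 2)) := by
  have h_incl : TLBincl (n + 1) (JWB (n + 1)) =
      wenzlStep (bqInt n / bqInt (n + 1)) (TLBincl (n + 1) (TLBincl n (JWB n)))
        (EB (Fin.last n).castSucc) := by
    rw [JWB_succ, map_wenzlStep, TLBincl_EB]
  have h_incl_idem := h₁.map (TLBincl (n + 1))
  rw [h_incl] at h_incl_idem
  rw [JWB_succ (n + 1), h_incl]
  refine isIdempotentElem_wenzlStep_wenzlStep ((h₀.map _).map _) h_incl_idem
    (commute_TLBincl_TLBincl_EB_last _) (EB_mul_self (by simp))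
    (EB_succ_mul_EB_castSucc_mul_EB_succ (Fin.last n)) ?_
  simpa [add_assoc, one_add_one_eq_two] using one_add_bqInt_div_mul_eq_zero n

end JonesWenzl

/-- The recursively defined elements `Q^{(n)} ∈ TL^B_n`
(`Q^{(0)} = 1`, `Q^{(n+1)} = Q^{(n)} + ([n]_s/[n+1]_s) Q^{(n)} e_n Q^{(n)}`)
are idempotent. -/
theorem JWB_idempotent (n : ℕ) : JWB n * JWB n = JWB n := by
  induction n using Nat.twoStepInduction with
  | zero => exact one_mul 1
  | one => exact isIdempotentElem_JWB_one
  | more n hn hn' => exact isIdempotentElem_JWB_add_two hn hn'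
end
end
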